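/- arXiv:1908.01149 — 3 statements merged into one kernel-verified Lean document; each statement's English description precedes it below -/
import Mathlib

section
/- Let I = [a,b] be a compact interval of real numbers and f : I → I a continuous map. Then (I,f) has the approximate product property and zero topological entropy if and only if f has a unique attracting fixed point, i.e. there exists p ∈ I such that f(p) = p and for every x ∈ I, f^n(x) → p as n → ∞. -/
open MeasureTheory Filter Set

section Defs

variable {X : Type*} [MetricSpace X]

/-- `segStart m t k` is the time `s_k` at which the `k`-th orbit segment starts
(indexing from `k = 0`): `s_0 = 0`, `s_{k+1} = s_k + m_k + t_k - 1`. -/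
def segStart (m t : ℕ → ℕ) (k : ℕ) : ℕ :=
  ∑ i ∈ Finset.range k, (m i + t i - 1)

/-- `(δ, ε)`-tracing of the sequence of orbit segments `(C k, m k)` with gaps `t k`
by the point `z`. -/
def Traced (f : X → X) (C : ℕ → X) (m t : ℕ → ℕ) (δ ε : ℝ) (z : X) : Prop :=
  ∀ k : ℕ,
    (((Finset.range (m k)).filter
      (fun j => ε < dist (f^[segStart m t k + j] z) (f^[j] (C k)))).card : ℝ)
      ≤ δ * (m k)

/-- The approximate product property. -/
def ApproxProduct (f : X → X) : Prop :=
  ∀ δ₁ δ₂ ε : ℝ, 0 < δ₁ → 0 < δ₂ → 0 < ε →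
    ∃ M : ℕ, ∀ n : ℕ, M < n → ∀ C : ℕ → X,
      ∃ t : ℕ → ℕ, (∀ k, 0 < t k) ∧ (∀ k, (t k : ℝ) ≤ 1 + δ₁ * n) ∧
        ∃ z : X, Traced f C (fun _ => n) t δ₂ ε z

/-- The strict approximate product property. -/
def StrictApproxProduct (f : X → X) : Prop :=
  ∀ δ ε : ℝ, 0 < δ → 0 < ε →
    ∃ M : ℕ, ∀ n : ℕ, M < n → ∀ C : ℕ → X,
      ∃ t : ℕ → ℕ, (∀ k, 0 < t k) ∧ (∀ k, (t k : ℝ) ≤ 1 + δ * n) ∧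
        ∃ z : X, Traced f C (fun _ => n) t 0 ε z

/-- Maximal cardinality of an `(n, ε)`-separated subset of `K`. -/
noncomputable def sepNum (f : X → X) (K : Set X) (n : ℕ) (ε : ℝ) : ℕ :=
  sSup {c : ℕ | ∃ S : Finset X, ↑S ⊆ K ∧ S.card = c ∧
    ∀ y ∈ S, ∀ y' ∈ S, y ≠ y' → ∃ j < n, ε < dist (f^[j] y) (f^[j] y')}

/-- Entropy of `f` on `K` at scale `ε`:
`h(K, f, ε) = limsup_n (1/n) log s(K, n, ε)`. -/
noncomputable def entScale (f : X → X) (K : Set X) (ε : ℝ) : EReal :=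
  limsup (fun n : ℕ => ((Real.log (sepNum f K n ε) / n : ℝ) : EReal)) atTop

/-- Bowen's topological entropy `h(f) = lim_{ε → 0} h(X, f, ε)`
(the limit is a supremum by monotonicity in `ε`). -/
noncomputable def topEnt (f : X → X) : EReal :=
  ⨆ (ε : ℝ) (_ : (0:ℝ) < ε), entScale f Set.univ ε

/-- Unique ergodicity: there is exactly one `f`-invariant Borel probability measure. -/
def UniquelyErgodic [MeasurableSpace X] (f : X → X) : Prop :=
  ∃! μ : Measure X, IsProbabilityMeasure μ ∧ Measure.map f μ = μ

/-- Minimality: every orbit is dense. -/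
def MinimalSystem (f : X → X) : Prop :=
  ∀ x : X, Dense (Set.range fun n => f^[n] x)

/-!
On the interval, any `f` having no point of period two other than a fixed point `p` attracts
uniformly to `p`: the extreme points of `J = ⋂ₙ range f^[n] = f(J)` cannot lie on either side of
`p`, since they would force a point `w < p` with `f (f w) ≤ w`. Uniform attraction makes all long
orbit segments close to `p` most of the time, which gives the approximate product property with no
gaps, and makes `sepNum` bounded in time.

Conversely, suppose two orbits stay at a positive distance. Tracing all concatenations of `2 * m`
segments of them produces `2 ^ (2 * m)` points. The gaps may be different for different points, but
up to a bounded error the start times of all segments are determined by `m` bits, so `2 ^ m` of the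
points have almost synchronous segments, and these are pairwise separated. Hence the entropy is
positive. In particular, if the entropy vanishes, a periodic point must coincide with `p`.
-/

open Function Topology

/-! ### Continuous self-maps of compact connected linear orders -/

section LinearOrder

instance preconnectedSpace_orderDual {β : Type*} [TopologicalSpace β] [PreconnectedSpace β] :
    PreconnectedSpace βᵒᵈ :=
  inferInstanceAs (PreconnectedSpace β)

instance compactSpace_orderDual {β : Type*} [TopologicalSpace β] [CompactSpace β] :
    CompactSpace βᵒᵈ :=
  inferInstanceAs (CompactSpace β)

variable {α : Type*} [LinearOrder α] [TopologicalSpace α] [OrderTopology α] [PreconnectedSpace α]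
  {f : α → α} {p : α}

theorem isPreconnected_Icc_of_preconnectedSpace (u v : α) : IsPreconnected (Icc u v) := by
  rcases le_or_gt u v with huv | hvu
  · have hrange : range (Subtype.val ∘ projIcc u v huv) = Icc u v := by
      rw [range_comp, range_projIcc, image_univ, Subtype.range_coe]
    exact hrange ▸ isPreconnected_range (continuous_subtype_val.comp continuous_projIcc)
  · exact Icc_eq_empty_of_lt hvu ▸ isPreconnected_empty

variable [CompactSpace α]

theorem exists_isFixedPt_le_of_apply_le (hf : Continuous f) {u : α} (hu : f u ≤ u) :
    ∃ c ≤ u, IsFixedPt f c := by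
  obtain ⟨bot, -, hbot⟩ := isCompact_univ.exists_isLeast ⟨u, mem_univ u⟩
  have hle (x : α) : bot ≤ x := hbot (mem_univ x)
  obtain ⟨c, hc, hfix⟩ := (isPreconnected_Icc_of_preconnectedSpace bot u).intermediate_value₂
    (right_mem_Icc.mpr (hle u)) (left_mem_Icc.mpr (hle u)) hf.continuousOn continuousOn_id
    hu (hle (f bot))
  exact ⟨c, hc.2, hfix⟩

theorem exists_isFixedPt_of_continuous [Nonempty α] (hf : Continuous f) : ∃ c, IsFixedPt f c := by
  obtain ⟨top, -, htop⟩ := (isCompact_univ (X := α)).exists_isGreatest univ_nonempty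
  obtain ⟨c, -, hc⟩ := exists_isFixedPt_le_of_apply_le hf (htop (mem_univ (f top)))
  exact ⟨c, hc⟩

theorem lt_apply_of_lt_of_forall_isFixedPt_eq (hf : Continuous f)
    (hfix : ∀ x, IsFixedPt f x → x = p) {u : α} (hu : u < p) : u < f u := by
  by_contra! hle
  obtain ⟨c, hcu, hc⟩ := exists_isFixedPt_le_of_apply_le hf hle
  exact (hcu.trans_lt hu).ne (hfix c hc)

theorem apply_lt_of_lt_of_forall_isFixedPt_eq (hf : Continuous f)
    (hfix : ∀ x, IsFixedPt f x → x = p) {u : α} (hu : p < u) : f u < u :=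
  lt_apply_of_lt_of_forall_isFixedPt_eq (α := αᵒᵈ) hf hfix hu

theorem le_of_mem_of_subset_image_of_isPeriodicPt_two_eq (hf : Continuous f)
    (hp : IsFixedPt f p) (hper : ∀ x, IsPeriodicPt f 2 x → x = p) {J : Set α} (hJ : IsCompact J)
    (hsurj : J ⊆ f '' J) {z : α} (hz : z ∈ J) : p ≤ z := by
  have hfix (x : α) (hx : IsFixedPt f x) : x = p := hper x (hx.isPeriodicPt 2)
  obtain ⟨c, hcJ, hc⟩ := hJ.exists_isLeast ⟨z, hz⟩
  obtain ⟨d, hdJ, hd⟩ := hJ.exists_isGreatest ⟨z, hz⟩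
  obtain ⟨x, hxJ, rfl⟩ := hsurj hcJ
  obtain ⟨y, hyJ, rfl⟩ := hsurj hdJ
  refine le_trans ?_ (hc hz)
  by_contra! hcp
  have hpx : p < x := by
    rcases lt_trichotomy x p with hxp | rfl | hpx
    · exact absurd (hc hxJ) (lt_apply_of_lt_of_forall_isFixedPt_eq hf hfix hxp).not_ge
    · exact absurd hp hcp.ne
    · exact hpx
  have hyp : y < p := by
    rcases lt_trichotomy y p with hyp | rfl | hpy
    · exact hyp
    · exact absurd (hp ▸ hd hxJ) hpx.not_ge
    · exact absurd (hd hyJ) (apply_lt_of_lt_of_forall_isFixedPt_eq hf hfix hpy).not_ge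
  obtain ⟨w, ⟨hyw, hwp⟩, rfl⟩ : x ∈ f '' Icc y p :=
    (isPreconnected_Icc_of_preconnectedSpace y p).intermediate_value (right_mem_Icc.mpr hyp.le)
      (left_mem_Icc.mpr hyp.le) hf.continuousOn ⟨hp.symm ▸ hpx.le, hd hxJ⟩
  have hw : w < p := hwp.lt_of_ne fun h => hpx.ne' (h ▸ hp)
  have hlt : w < f (f w) :=
    lt_apply_of_lt_of_forall_isFixedPt_eq (hf.comp hf) (fun v hv => hper v hv) hw
  exact ((hc hyJ).trans hyw).not_gt hlt

theorem subset_singleton_of_subset_image_of_isPeriodicPt_two_eq (hf : Continuous f)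
    (hp : IsFixedPt f p) (hper : ∀ x, IsPeriodicPt f 2 x → x = p) {J : Set α} (hJ : IsCompact J)
    (hsurj : J ⊆ f '' J) : J ⊆ {p} := fun _ hz =>
  le_antisymm
    (le_of_mem_of_subset_image_of_isPeriodicPt_two_eq (α := αᵒᵈ) hf hp hper hJ hsurj hz)
    (le_of_mem_of_subset_image_of_isPeriodicPt_two_eq hf hp hper hJ hsurj hz)

end LinearOrder

/-! ### The eventual range -/

section EventualRange

/-- The intersection of the ranges of all iterates of `f`. For a continuous self-map of a compact
Hausdorff space it is the largest set mapped onto itself, and it attracts the space uniformly. -/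
def eventualRange {α : Type*} (f : α → α) : Set α := ⋂ n : ℕ, range f^[n]

theorem antitone_range_iterate {α : Type*} (f : α → α) : Antitone fun n : ℕ => range f^[n] :=
  antitone_nat_of_succ_le fun _ => range_comp_subset_range f _

theorem isCompact_eventualRange {α : Type*} [TopologicalSpace α] [CompactSpace α] [T2Space α]
    {f : α → α} (hf : Continuous f) : IsCompact (eventualRange f) :=
  (isClosed_iInter fun n => (isCompact_range (hf.iterate n)).isClosed).isCompact

theorem eventualRange_subset_image {α : Type*} [TopologicalSpace α] [CompactSpace α] [T2Space α]
    {f : α → α} (hf : Continuous f) : eventualRange f ⊆ f '' eventualRange f := by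
  intro x hx
  have hclosed (n : ℕ) : IsClosed (f ⁻¹' {x} ∩ range f^[n]) :=
    (isClosed_singleton.preimage hf).inter (isCompact_range (hf.iterate n)).isClosed
  have hnonempty (n : ℕ) : (f ⁻¹' {x} ∩ range f^[n]).Nonempty := by
    obtain ⟨y, hy⟩ := mem_iInter.mp hx (n + 1)
    exact ⟨f^[n] y, (iterate_succ_apply' f n y).symm.trans hy, mem_range_self y⟩
  obtain ⟨y, hy⟩ := IsCompact.nonempty_iInter_of_sequence_nonempty_isCompact_isClosed _
    (fun n => inter_subset_inter_right _ (antitone_range_iterate f n.le_succ)) hnonempty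
    (hclosed 0).isCompact hclosed
  rw [mem_iInter] at hy
  exact ⟨y, mem_iInter.mpr fun n => (hy n).2, (hy 0).1⟩

theorem tendstoUniformly_iterate_of_eventualRange_subset {α : Type*} [UniformSpace α]
    [CompactSpace α] [T2Space α] {f : α → α} {p : α} (hf : Continuous f)
    (hrange : eventualRange f ⊆ {p}) :
    TendstoUniformly (fun n => f^[n]) (fun _ => p) atTop := by
  intro u hu
  obtain ⟨N, hN⟩ := exists_subset_nhds_of_isCompact (antitone_range_iterate f).directed_ge
    (fun n => isCompact_range (hf.iterate n))
    (U := UniformSpace.ball p u) (by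
      intro x hx
      rw [mem_singleton_iff.mp (hrange hx)]
      exact UniformSpace.ball_mem_nhds p hu)
  filter_upwards [eventually_ge_atTop N] with n hn x
  exact hN (antitone_range_iterate f hn (mem_range_self x))

theorem tendstoUniformly_iterate_of_forall_isPeriodicPt_two_eq {α : Type*} [LinearOrder α]
    [UniformSpace α] [OrderTopology α] [PreconnectedSpace α] [CompactSpace α] {f : α → α} {p : α}
    (hf : Continuous f) (hp : IsFixedPt f p) (hper : ∀ x, IsPeriodicPt f 2 x → x = p) :
    TendstoUniformly (fun n => f^[n]) (fun _ => p) atTop :=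
  tendstoUniformly_iterate_of_eventualRange_subset hf
    (subset_singleton_of_subset_image_of_isPeriodicPt_two_eq hf hp hper
      (isCompact_eventualRange hf) (eventualRange_subset_image hf))

end EventualRange

/-! ### Consequences of uniform attraction -/

section UniformAttraction

variable {f : X → X} {p : X}

theorem exists_forall_dist_iterate_lt_of_tendstoUniformly
    (h : TendstoUniformly (fun n => f^[n]) (fun _ => p) atTop) {ε : ℝ} (hε : 0 < ε) :
    ∃ N, ∀ i ≥ N, ∀ j ≥ N, ∀ x y, dist (f^[i] x) (f^[j] y) < ε := by
  obtain ⟨N, hN⟩ := eventually_atTop.mp (Metric.tendstoUniformly_iff.mp h (ε / 2) (half_pos hε))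
  refine ⟨N, fun i hi j hj x y => ?_⟩
  linarith [dist_triangle_left (f^[i] x) (f^[j] y) p, hN i hi x, hN j hj y]

theorem approxProduct_of_tendstoUniformly
    (h : TendstoUniformly (fun n => f^[n]) (fun _ => p) atTop) : ApproxProduct f := by
  intro δ₁ δ₂ ε hδ₁ hδ₂ hε
  obtain ⟨N, hN⟩ := exists_forall_dist_iterate_lt_of_tendstoUniformly h hε
  obtain ⟨M, hM⟩ := exists_nat_gt (N / δ₂)
  refine ⟨M, fun n hn C => ⟨fun _ => 1, fun _ => one_pos, fun k => ?_, p, fun k => ?_⟩⟩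
  · have : 0 ≤ δ₁ * n := by positivity
    simpa using this
  · have herrors : (Finset.range n).filter
        (fun j => ε < dist (f^[segStart (fun _ => n) (fun _ => 1) k + j] p) (f^[j] (C k))) ⊆
        Finset.range N := by
      intro j hj
      by_contra hNj
      rw [Finset.mem_range, not_lt] at hNj
      exact (Finset.mem_filter.mp hj).2.not_gt (hN _ (le_add_left hNj) j hNj p (C k))
    calc (_ : ℝ) ≤ N := by exact_mod_cast Finset.card_range N ▸ Finset.card_le_card herrors
      _ ≤ δ₂ * M := ((div_lt_iff₀' hδ₂).mp hM).le
      _ ≤ δ₂ * n := by gcongr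

theorem sepNum_eq_of_forall_dist_iterate_le {K : Set X} {ε : ℝ} {N n : ℕ}
    (hN : ∀ j ≥ N, ∀ x y, dist (f^[j] x) (f^[j] y) ≤ ε) (hn : N ≤ n) :
    sepNum f K n ε = sepNum f K N ε := by
  have hsep (y y' : X) :
      (∃ j < n, ε < dist (f^[j] y) (f^[j] y')) ↔ ∃ j < N, ε < dist (f^[j] y) (f^[j] y') := by
    refine exists_congr fun j => and_congr_left fun hj => ⟨fun _ => ?_, fun h => h.trans_le hn⟩
    by_contra! hNj
    exact hj.not_ge (hN j hNj y y')
  simp only [sepNum, hsep]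

theorem entScale_eq_zero_of_forall_dist_iterate_le {K : Set X} {ε : ℝ} {N : ℕ}
    (hN : ∀ j ≥ N, ∀ x y, dist (f^[j] x) (f^[j] y) ≤ ε) : entScale f K ε = 0 := by
  have hlim : Tendsto (fun n : ℕ => Real.log (sepNum f K n ε) / n) atTop (𝓝 0) := by
    refine (tendsto_const_div_atTop_nhds_zero_nat (Real.log (sepNum f K N ε))).congr' ?_
    filter_upwards [eventually_ge_atTop N] with n hn
    rw [sepNum_eq_of_forall_dist_iterate_le hN hn]
  exact ((continuous_coe_real_ereal.tendsto 0).comp hlim).limsup_eq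

theorem topEnt_eq_zero_of_tendstoUniformly
    (h : TendstoUniformly (fun n => f^[n]) (fun _ => p) atTop) : topEnt f = 0 := by
  have hscale (ε : ℝ) (hε : 0 < ε) : entScale f univ ε = 0 := by
    obtain ⟨N, hN⟩ := exists_forall_dist_iterate_lt_of_tendstoUniformly h hε
    exact entScale_eq_zero_of_forall_dist_iterate_le fun j hj x y => (hN j hj j hj x y).le
  exact (biSup_congr hscale).trans (biSup_const (s := Ioi 0) nonempty_Ioi)

end UniformAttraction

/-! ### Lower bounds for the entropy -/

section LowerBounds

variable {f : X → X}

theorem bddAbove_card_separated [CompactSpace X] (hf : Continuous f) (K : Set X) (n : ℕ) {ε : ℝ}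
    (hε : 0 < ε) :
    BddAbove {c : ℕ | ∃ S : Finset X, ↑S ⊆ K ∧ S.card = c ∧
      ∀ y ∈ S, ∀ y' ∈ S, y ≠ y' → ∃ j < n, ε < dist (f^[j] y) (f^[j] y')} := by
  obtain ⟨T, hT⟩ := Dynamics.exists_isDynCoverOf_of_isCompact_uniformContinuous isCompact_univ
    (CompactSpace.uniformContinuous_of_continuous hf) (Metric.dist_mem_uniformity (half_pos hε)) n
  refine ⟨T.card, ?_⟩
  rintro _ ⟨S, -, rfl, hS⟩
  refine Dynamics.IsDynNetIn.card_le_card_of_isDynCoverOf ⟨subset_univ _, ?_⟩ hT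
  intro y hy y' hy' hne
  refine disjoint_left.mpr fun x hx hx' => ?_
  obtain ⟨j, hj, hlt⟩ := hS y hy y' hy' hne
  have hxy : dist (f^[j] y) (f^[j] x) < ε / 2 := Dynamics.mem_ball_dynEntourage.mp hx j hj
  have hxy' : dist (f^[j] y') (f^[j] x) < ε / 2 := Dynamics.mem_ball_dynEntourage.mp hx' j hj
  linarith [dist_triangle_right (f^[j] y) (f^[j] y') (f^[j] x)]

theorem card_le_sepNum [CompactSpace X] (hf : Continuous f) {K : Set X} {n : ℕ} {ε : ℝ}
    (hε : 0 < ε) {ι : Type*} {F : Finset ι} {z : ι → X} (hzK : ∀ w ∈ F, z w ∈ K)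
    (hsep : (F : Set ι).Pairwise fun w w' => ∃ j < n, ε < dist (f^[j] (z w)) (f^[j] (z w'))) :
    F.card ≤ sepNum f K n ε := by
  classical
  have hinj : InjOn z F := by
    intro w hw w' hw' heq
    by_contra hne
    obtain ⟨j, -, hj⟩ := hsep hw hw' hne
    rw [heq, dist_self] at hj
    exact hj.not_gt hε
  refine le_csSup (bddAbove_card_separated hf K n hε)
    ⟨F.image z, ?_, Finset.card_image_of_injOn hinj, ?_⟩
  · simpa only [Finset.coe_image, image_subset_iff] using! hzK
  · simp only [Finset.forall_mem_image]
    exact fun w hw w' hw' hne => hsep hw hw' (ne_of_apply_ne z hne)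

theorem log_div_le_entScale_of_pow_le_sepNum {K : Set X} {ε : ℝ} {b N : ℕ} (hb : 0 < b)
    (hN : 0 < N) (h : ∀ m, b ^ m ≤ sepNum f K (N * m) ε) :
    ((Real.log b / N : ℝ) : EReal) ≤ entScale f K ε := by
  refine le_limsup_of_frequently_le (frequently_atTop.mpr fun m₀ => ?_)
  refine ⟨N * (m₀ + 1), by nlinarith, EReal.coe_le_coe_iff.mpr ?_⟩
  have hlog : (m₀ + 1 : ℕ) * Real.log b ≤ Real.log (sepNum f K (N * (m₀ + 1)) ε) := by
    rw [← Real.log_pow]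
    exact Real.log_le_log (by positivity) (by exact_mod_cast h (m₀ + 1))
  calc Real.log b / N = (m₀ + 1 : ℕ) * Real.log b / (N * (m₀ + 1) : ℕ) := by
        push_cast
        field_simp
    _ ≤ _ := by gcongr

theorem topEnt_pos_of_two_pow_le_sepNum {ε : ℝ} (hε : 0 < ε) {N : ℕ} (hN : 0 < N)
    (h : ∀ m, 2 ^ m ≤ sepNum f univ (N * m) ε) : 0 < topEnt f := by
  have hpos : 0 < Real.log (2 : ℕ) / N :=
    div_pos (Real.log_pos (by norm_num)) (Nat.cast_pos.mpr hN)
  calc (0 : EReal) < ((Real.log (2 : ℕ) / N : ℝ) : EReal) := EReal.coe_pos.mpr hpos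
    _ ≤ entScale f univ ε := log_div_le_entScale_of_pow_le_sepNum two_pos hN h
    _ ≤ topEnt f := le_iSup₂ (f := fun (ε : ℝ) (_ : 0 < ε) => entScale f univ ε) ε hε

end LowerBounds

/-! ### Coding the delays of a tracing point -/

section Delay

/-- The total delay at the start of segment `k` when segment `i` is followed by the gap `t i`;
a gap equal to `1` causes no delay. -/
def delay (t : ℕ → ℕ) (k : ℕ) : ℕ := ∑ i ∈ Finset.range k, (t i - 1)

/-- The delay after `2 * i` segments, rounded down to a multiple of `2 * r`. Since two gaps of size
at most `r + 1` cause a delay of at most `2 * r`, it grows by at most one unit when `i` does. -/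
def coarseDelay (r : ℕ) (t : ℕ → ℕ) (i : ℕ) : ℕ := delay t (2 * i) / (2 * r)

/-- The set of steps before `m` at which the coarse delay changes. It serves as a code of `m` bits
for the delays at the first `2 * m` segments. -/
def coarseDelayJumps (r : ℕ) (t : ℕ → ℕ) (m : ℕ) : Finset ℕ :=
  (Finset.range m).filter fun i => coarseDelay r t (i + 1) ≠ coarseDelay r t i

variable {r m : ℕ} {t u : ℕ → ℕ}

theorem segStart_const_eq (n : ℕ) (ht : ∀ k, 0 < t k) (k : ℕ) :
    segStart (fun _ => n) t k = n * k + delay t k := by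
  have hstep (i : ℕ) : n + t i - 1 = n + (t i - 1) := Nat.add_sub_assoc (ht i) n
  simp [segStart, delay, hstep, Finset.sum_add_distrib, mul_comm]

theorem delay_succ (t : ℕ → ℕ) (k : ℕ) : delay t (k + 1) = delay t k + (t k - 1) :=
  Finset.sum_range_succ _ _

theorem delay_le_mul (ht : ∀ k, t k ≤ r + 1) (k : ℕ) : delay t k ≤ r * k := by
  have := Finset.sum_le_card_nsmul (Finset.range k) (fun i => t i - 1) r
    fun i _ => Nat.sub_le_of_le_add (ht i)
  simpa [delay, mul_comm] using this

theorem coarseDelay_succ_eq_or (hr : 0 < r) (ht : ∀ k, t k ≤ r + 1) (i : ℕ) :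
    coarseDelay r t (i + 1) = coarseDelay r t i ∨
      coarseDelay r t (i + 1) = coarseDelay r t i + 1 := by
  have hdelay : delay t (2 * (i + 1)) =
      delay t (2 * i) + (t (2 * i) - 1) + (t (2 * i + 1) - 1) := by
    rw [← delay_succ, ← delay_succ, mul_add_one]
  have hlower : coarseDelay r t i ≤ coarseDelay r t (i + 1) := Nat.div_le_div_right (by lia)
  have hupper : coarseDelay r t (i + 1) ≤ (delay t (2 * i) + 2 * r) / (2 * r) :=
    Nat.div_le_div_right (by have := ht (2 * i); have := ht (2 * i + 1); lia)
  rw [Nat.add_div_right _ (by lia), ← coarseDelay] at hupper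
  lia

theorem coarseDelay_eq_of_coarseDelayJumps_eq (hr : 0 < r) (ht : ∀ k, t k ≤ r + 1)
    (hu : ∀ k, u k ≤ r + 1) (h : coarseDelayJumps r t m = coarseDelayJumps r u m) {i : ℕ}
    (hi : i ≤ m) : coarseDelay r t i = coarseDelay r u i := by
  induction i with
  | zero => simp [coarseDelay, delay]
  | succ i ih =>
    have hjump : coarseDelay r t (i + 1) ≠ coarseDelay r t i ↔
        coarseDelay r u (i + 1) ≠ coarseDelay r u i := by
      simpa [coarseDelayJumps, Nat.lt_of_succ_le hi] using Finset.ext_iff.mp h i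
    have := coarseDelay_succ_eq_or hr ht i
    have := coarseDelay_succ_eq_or hr hu i
    have := ih (by lia)
    lia

theorem delay_two_mul_le_add_of_coarseDelay_eq (hr : 0 < r) {i : ℕ}
    (h : coarseDelay r t i = coarseDelay r u i) : delay t (2 * i) ≤ delay u (2 * i) + 2 * r :=
  calc delay t (2 * i) ≤ 2 * r * coarseDelay r t i + 2 * r :=
        (Nat.lt_mul_div_succ _ (by positivity)).le
    _ = 2 * r * coarseDelay r u i + 2 * r := by rw [h]
    _ ≤ delay u (2 * i) + 2 * r := by gcongr; exact Nat.mul_div_le _ _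

theorem delay_le_add_of_coarseDelayJumps_eq (hr : 0 < r) (ht : ∀ k, t k ≤ r + 1)
    (hu : ∀ k, u k ≤ r + 1) (h : coarseDelayJumps r t m = coarseDelayJumps r u m) {k : ℕ}
    (hk : k < 2 * m) : delay t k ≤ delay u k + 3 * r := by
  have heven (i : ℕ) (hi : i ≤ m) : delay t (2 * i) ≤ delay u (2 * i) + 2 * r :=
    delay_two_mul_le_add_of_coarseDelay_eq hr (coarseDelay_eq_of_coarseDelayJumps_eq hr ht hu h hi)
  obtain ⟨i, rfl | rfl⟩ := Nat.even_or_odd' k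
  · have := heven i (by lia)
    lia
  · have := heven i (by lia)
    have := ht (2 * i)
    rw [delay_succ, delay_succ]
    lia

end Delay

/-! ### Tracing two separated orbits -/

section Tracing

variable {f : X → X}

theorem exists_add_eq_add_of_card_lt {n s s' L : ℕ} {B B' : Finset ℕ} (hs : s ≤ s' + L)
    (hs' : s' ≤ s + L) (hcard : L + B.card + B'.card < n) :
    ∃ j < n, ∃ j' < n, s + j = s' + j' ∧ j ∉ B ∧ j' ∉ B' := by
  obtain ⟨τ, hτ, hτB⟩ := Finset.exists_mem_notMem_of_card_lt_card
    (s := B.image (s + ·) ∪ B'.image (s' + ·)) (t := Finset.Ico (max s s') (min s s' + n)) <| by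
      have hunion := Finset.card_union_le (B.image (s + ·)) (B'.image (s' + ·))
      have hB := Finset.card_image_le (s := B) (f := (s + ·))
      have hB' := Finset.card_image_le (s := B') (f := (s' + ·))
      rw [Nat.card_Ico]
      lia
  rw [Finset.mem_Ico] at hτ
  simp only [Finset.mem_union, Finset.mem_image, not_or, not_exists, not_and] at hτB
  exact ⟨τ - s, by lia, τ - s', by lia, by lia, fun h => hτB.1 _ h (by lia),
    fun h => hτB.2 _ h (by lia)⟩

theorem Traced.exists_lt_dist_iterate {C C' : ℕ → X} {t t' : ℕ → ℕ} {z z' : X} {n L k : ℕ}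
    {δ ε ρ : ℝ} (hz : Traced f C (fun _ => n) t δ ε z) (hz' : Traced f C' (fun _ => n) t' δ ε z')
    (hs : segStart (fun _ => n) t k ≤ segStart (fun _ => n) t' k + L)
    (hs' : segStart (fun _ => n) t' k ≤ segStart (fun _ => n) t k + L)
    (hn : L + 2 * (δ * n) < n) (hερ : 3 * ε < ρ)
    (hsep : ∀ i j, ρ ≤ dist (f^[i] (C k)) (f^[j] (C' k))) :
    ∃ j < n, ε < dist (f^[segStart (fun _ => n) t k + j] z)
      (f^[segStart (fun _ => n) t k + j] z') := by
  obtain ⟨j, hj, j', hj', hjj', hgood, hgood'⟩ := exists_add_eq_add_of_card_lt hs hs'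
    (B := (Finset.range n).filter fun j =>
      ε < dist (f^[segStart (fun _ => n) t k + j] z) (f^[j] (C k)))
    (B' := (Finset.range n).filter fun j =>
      ε < dist (f^[segStart (fun _ => n) t' k + j] z') (f^[j] (C' k)))
    (Nat.cast_lt (α := ℝ).mp (by push_cast; linarith [hz k, hz' k]))
  simp only [Finset.mem_filter, Finset.mem_range, hj, hj', true_and, not_lt] at hgood hgood'
  refine ⟨j, hj, ?_⟩
  rw [← hjj'] at hgood'
  rw [dist_comm] at hgood
  have htriangle := dist_triangle4 (f^[j] (C k)) (f^[segStart (fun _ => n) t k + j] z)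
    (f^[segStart (fun _ => n) t k + j] z') (f^[j'] (C' k))
  linarith [hsep j j']

theorem Traced.exists_lt_dist_iterate_of_coarseDelayJumps_eq {C C' : ℕ → X} {t t' : ℕ → ℕ}
    {z z' : X} {r m k : ℕ} {ε ρ : ℝ} (hz : Traced f C (fun _ => 6 * r) t (1 / 6) ε z)
    (hz' : Traced f C' (fun _ => 6 * r) t' (1 / 6) ε z') (hr : 0 < r) (ht : ∀ k, 0 < t k)
    (ht' : ∀ k, 0 < t' k) (htr : ∀ k, t k ≤ r + 1) (htr' : ∀ k, t' k ≤ r + 1)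
    (hjumps : coarseDelayJumps r t m = coarseDelayJumps r t' m) (hk : k < 2 * m) (hερ : 3 * ε < ρ)
    (hsep : ∀ i j, ρ ≤ dist (f^[i] (C k)) (f^[j] (C' k))) :
    ∃ j < 14 * r * m, ε < dist (f^[j] z) (f^[j] z') := by
  have hs : segStart (fun _ => 6 * r) t k ≤ segStart (fun _ => 6 * r) t' k + 3 * r := by
    rw [segStart_const_eq _ ht, segStart_const_eq _ ht', add_assoc]
    gcongr
    exact delay_le_add_of_coarseDelayJumps_eq hr htr htr' hjumps hk
  have hs' : segStart (fun _ => 6 * r) t' k ≤ segStart (fun _ => 6 * r) t k + 3 * r := by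
    rw [segStart_const_eq _ ht, segStart_const_eq _ ht', add_assoc]
    gcongr
    exact delay_le_add_of_coarseDelayJumps_eq hr htr' htr hjumps.symm hk
  have hrpos : (0 : ℝ) < r := Nat.cast_pos.mpr hr
  obtain ⟨j, hj, hlt⟩ :=
    hz.exists_lt_dist_iterate hz' hs hs' (by push_cast; linarith) hερ hsep
  refine ⟨_, ?_, hlt⟩
  calc segStart (fun _ => 6 * r) t k + j < 6 * r * k + r * k + 6 * r := by
        rw [segStart_const_eq _ ht]
        linarith [delay_le_mul htr k]
    _ ≤ 7 * r * (k + 1) := by lia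
    _ ≤ 7 * r * (2 * m) := by gcongr; exact hk
    _ = 14 * r * m := by ring

theorem ApproxProduct.exists_traced_six_mul (happ : ApproxProduct f) {ε : ℝ} (hε : 0 < ε) :
    ∃ r > 0, ∀ C : ℕ → X, ∃ t : ℕ → ℕ, (∀ k, 0 < t k) ∧ (∀ k, t k ≤ r + 1) ∧
      ∃ z, Traced f C (fun _ => 6 * r) t (1 / 6) ε z := by
  obtain ⟨M, hM⟩ := happ (1 / 6) (1 / 6) ε (by norm_num) (by norm_num) hε
  refine ⟨M + 1, M.succ_pos, fun C => ?_⟩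
  obtain ⟨t, hpos, hle, hz⟩ := hM (6 * (M + 1)) (by lia) C
  refine ⟨t, hpos, fun k => Nat.cast_le (α := ℝ).mp ((hle k).trans_eq ?_), hz⟩
  push_cast
  ring

theorem exists_two_pow_le_card_filter_coarseDelayJumps_eq (r m : ℕ) (t : Finset ℕ → ℕ → ℕ) :
    ∃ c, 2 ^ m ≤
      ((Finset.range (2 * m)).powerset.filter fun w => coarseDelayJumps r (t w) m = c).card := by
  obtain ⟨c, -, hc⟩ := Finset.exists_le_card_fiber_of_mul_le_card_of_maps_to
    (s := (Finset.range (2 * m)).powerset) (t := (Finset.range m).powerset)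
    (f := fun w => coarseDelayJumps r (t w) m) (n := 2 ^ m)
    (fun w _ => Finset.mem_powerset.mpr (Finset.filter_subset _ _)) (Finset.powerset_nonempty _)
    (by simp [two_mul, pow_add])
  exact ⟨c, hc⟩

theorem ApproxProduct.exists_two_pow_le_sepNum [CompactSpace X] (happ : ApproxProduct f)
    (hf : Continuous f) {p q : X} {ρ : ℝ} (hρ : 0 < ρ)
    (hpq : ∀ i j, ρ ≤ dist (f^[i] p) (f^[j] q)) :
    ∃ N > 0, ∀ m, 2 ^ m ≤ sepNum f univ (N * m) (ρ / 4) := by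
  classical
  obtain ⟨r, hr, htrace⟩ := happ.exists_traced_six_mul (show 0 < ρ / 4 by positivity)
  let C (w : Finset ℕ) (k : ℕ) : X := if k ∈ w then p else q
  choose t ht htr z hz using fun w => htrace (C w)
  refine ⟨14 * r, by positivity, fun m => ?_⟩
  obtain ⟨c, hc⟩ := exists_two_pow_le_card_filter_coarseDelayJumps_eq r m t
  refine hc.trans (card_le_sepNum hf (by positivity) (z := z) (fun _ _ => mem_univ _) ?_)
  intro w hw w' hw' hne
  simp only [Finset.coe_filter, mem_ofPred_eq, Finset.mem_powerset] at hw hw'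
  obtain ⟨k, hk⟩ : ∃ k, ¬(k ∈ w ↔ k ∈ w') := by
    by_contra! hiff
    exact hne (Finset.ext hiff)
  have hsep (i j : ℕ) : ρ ≤ dist (f^[i] (C w k)) (f^[j] (C w' k)) := by
    by_cases hkw : k ∈ w <;> by_cases hkw' : k ∈ w' <;> simp only [hkw, hkw', not_true] at hk
    · simpa [C, hkw, hkw'] using hpq i j
    · simpa [C, hkw, hkw', dist_comm] using hpq j i
  have hkm : k < 2 * m := by
    by_cases hkw : k ∈ w
    · exact Finset.mem_range.mp (hw.1 hkw)
    · exact Finset.mem_range.mp (hw'.1 (by tauto))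
  exact (hz w).exists_lt_dist_iterate_of_coarseDelayJumps_eq (hz w') hr (ht w) (ht w') (htr w)
    (htr w') (hw.2.trans hw'.2.symm) hkm (by linarith) hsep

theorem ApproxProduct.topEnt_pos_of_forall_le_dist [CompactSpace X] (happ : ApproxProduct f)
    (hf : Continuous f) {p q : X} {ρ : ℝ} (hρ : 0 < ρ)
    (hpq : ∀ i j, ρ ≤ dist (f^[i] p) (f^[j] q)) : 0 < topEnt f := by
  obtain ⟨N, hN, hpow⟩ := happ.exists_two_pow_le_sepNum hf hρ hpq
  exact topEnt_pos_of_two_pow_le_sepNum (by positivity) hN hpow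

end Tracing

/-! ### Periodic points -/

section PeriodicPoints

variable {f : X → X} {p q : X}

theorem exists_pos_forall_le_dist_iterate (hp : IsFixedPt f p) (hq : q ∈ periodicPts f)
    (hne : q ≠ p) : ∃ ρ > 0, ∀ i j, ρ ≤ dist (f^[i] p) (f^[j] q) := by
  obtain ⟨n, hn, hper⟩ := hq
  let orbit : Set X := range fun j => f^[j] q
  have hfinite : orbit.Finite := by
    refine ((Finset.range n).finite_toSet.image fun j => f^[j] q).subset ?_
    rintro _ ⟨j, rfl⟩
    exact ⟨j % n, by simpa using Nat.mod_lt j hn, hper.iterate_mod_apply j⟩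
  have hmem : p ∉ orbit := by
    rintro ⟨j, rfl⟩
    exact hne <| calc
      q = f^[n * j] q := (hper.mul_const j).symm
      _ = f^[n * j - j] (f^[j] q) := by
        rw [← iterate_add_apply, Nat.sub_add_cancel (Nat.le_mul_of_pos_left j hn)]
      _ = f^[j] q := iterate_fixed hp _
  refine ⟨Metric.infDist p orbit,
    (hfinite.isClosed.notMem_iff_infDist_pos (range_nonempty _)).mp hmem, fun i j => ?_⟩
  rw [iterate_fixed hp]
  exact Metric.infDist_le_dist_of_mem (mem_range_self j)

theorem ApproxProduct.eq_of_isFixedPt_of_mem_periodicPts [CompactSpace X]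
    (happ : ApproxProduct f) (hf : Continuous f) (hent : topEnt f = 0) (hp : IsFixedPt f p)
    (hq : q ∈ periodicPts f) : q = p := by
  by_contra hne
  obtain ⟨ρ, hρ, hpq⟩ := exists_pos_forall_le_dist_iterate hp hq hne
  exact (happ.topEnt_pos_of_forall_le_dist hf hρ hpq).ne' hent

theorem eq_of_isPeriodicPt_of_tendsto_iterate {α : Type*} [TopologicalSpace α] [T2Space α]
    {f : α → α} {p q : α} {n : ℕ} (hq : IsPeriodicPt f n q) (hn : 0 < n)
    (hlim : Tendsto (fun k => f^[k] q) atTop (𝓝 p)) : q = p := by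
  have hconst (k : ℕ) : f^[n * k] q = q := hq.mul_const k
  have hsub := hlim.comp (tendsto_id.const_mul_atTop' hn)
  simp only [comp_def, id, hconst] at hsub
  exact tendsto_nhds_unique tendsto_const_nhds hsub

end PeriodicPoints

theorem interval_app_zero_entropy_iff_attracting_fixed_point_general
    {X : Type*} [MetricSpace X] [LinearOrder X] [OrderTopology X] [CompactSpace X]
    [ConnectedSpace X] (f : X → X) (hf : Continuous f) :
    (ApproxProduct f ∧ topEnt f = 0) ↔
      ∃ p : X, f p = p ∧ ∀ x : X, Tendsto (fun n => f^[n] x) atTop (𝓝 p) := by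
  constructor
  · rintro ⟨happ, hent⟩
    obtain ⟨p, hp⟩ := exists_isFixedPt_of_continuous hf
    have hper (x : X) (hx : IsPeriodicPt f 2 x) : x = p :=
      happ.eq_of_isFixedPt_of_mem_periodicPts hf hent hp ⟨2, two_pos, hx⟩
    exact ⟨p, hp, (tendstoUniformly_iterate_of_forall_isPeriodicPt_two_eq hf hp hper).tendsto_at⟩
  · rintro ⟨p, hp, hlim⟩
    have hper (x : X) (hx : IsPeriodicPt f 2 x) : x = p :=
      eq_of_isPeriodicPt_of_tendsto_iterate hx two_pos (hlim x)
    have hunif := tendstoUniformly_iterate_of_forall_isPeriodicPt_two_eq hf hp hper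
    exact ⟨approxProduct_of_tendstoUniformly hunif, topEnt_eq_zero_of_tendstoUniformly hunif⟩

/-- **Theorem 1.5 (Sun).** A continuous map of a compact interval has the approximate
product property and zero topological entropy if and only if it has a unique
attracting fixed point: some `p` with `f p = p` and `f^[n] x → p` for every `x`. -/
theorem interval_app_zero_entropy_iff_attracting_fixed_point
    (a b : ℝ) (hab : a ≤ b) (f : Set.Icc a b → Set.Icc a b) (hf : Continuous f) :
    (ApproxProduct f ∧ topEnt f = 0) ↔
      ∃ p : Set.Icc a b, f p = p ∧
        ∀ x : Set.Icc a b, Tendsto (fun n => f^[n] x) atTop (nhds p) := by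
  have : ConnectedSpace (Icc a b) := Subtype.connectedSpace (isConnected_Icc hab)
  exact interval_app_zero_entropy_iff_attracting_fixed_point_general f hf

end Defs
end

section
/- Let (X,d) be a compact metric space and f : X → X a continuous map such that (X,f) has the approximate product property. Then for every f-invariant Borel probability measure μ on X, every open neighborhood U of μ in the weak-* topology on Borel probability measures, and every ε > 0 and β > 0, there exists a nonempty compact set Λ ⊆ X with f(Λ) ⊆ Λ such that: (i) every f-invariant Borel probability measure ν with ν(Λ) = 1 belongs to U, and (ii) h(Λ,f,ε) < β, where h(Λ,f,ε) = limsup_{n→∞} (1/n) log s(Λ,n,ε). -/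
open MeasureTheory Filter Set

section Defs

variable {X : Type*} [MetricSpace X]

/-!
Choose a bounded continuous `Ψ` with values in a Euclidean space such that `∫ Ψ ∂μ = 0` and every
`ν` with small `‖∫ Ψ ∂ν‖` lies in `U`. The vector-valued Birkhoff sum of length `n` has `μ`-mean
zero, so greedily sampled points `x_0, …, x_{p-1}` have Birkhoff sums adding up to at most
`√p * n * ‖Ψ‖`, which is negligible against `p * n`; no ergodic decomposition is needed. The
approximate product property gives a point `z` tracing the periodic concatenation of the orbit
segments of the `x_k`, and `Λ` is the orbit closure of `z`.

* Every stretch of the orbit of `z` of length `p * n` has a small Birkhoff sum. By continuity this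
  passes to `Λ`, and integrating it bounds `‖∫ Ψ ∂ν‖` for every invariant `ν` carried by `Λ`.
* A stretch of length `n` is determined up to `ε` by its position relative to the concatenation,
  for which there are at most `p * (2 * n + 1) ^ 2` possibilities, and by rough positions of the
  orbit at the few badly traced times. There are at most `exp (b * n)` such data, with `b` small.
-/

open Dynamics Function Topology
open scoped BoundedContinuousFunction

section WeakNeighborhoods

variable {Ω : Type*} [TopologicalSpace Ω] [MeasurableSpace Ω] [OpensMeasurableSpace Ω]

theorem exists_finset_forall_mem_of_abs_integral_sub_le (μ : ProbabilityMeasure Ω)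
    {U : Set (ProbabilityMeasure Ω)} (hU : U ∈ 𝓝 μ) :
    ∃ I : Finset (Ω →ᵇ ℝ), ∃ η > 0, ∀ ν : ProbabilityMeasure Ω,
      (∀ φ ∈ I, |∫ x, φ x ∂(ν : Measure Ω) - ∫ x, φ x ∂(μ : Measure Ω)| ≤ η) → ν ∈ U := by
  let F : ProbabilityMeasure Ω → (Ω →ᵇ ℝ) → ℝ := fun ν φ ↦ ∫ x, φ x ∂(ν : Measure Ω)
  have tendsto_of_comap : Tendsto id (comap F (𝓝 (F μ))) (𝓝 μ) :=
    ProbabilityMeasure.tendsto_iff_forall_integral_tendsto.2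
      (tendsto_pi_nhds.1 (tendsto_comap (f := F)))
  obtain ⟨V, hV, hVU⟩ := tendsto_of_comap hU
  rw [nhds_pi, Filter.mem_pi] at hV
  obtain ⟨I, hI, t, ht, htV⟩ := hV
  have eventually_ball_subset : ∀ᶠ η in 𝓝[>] (0 : ℝ), ∀ φ ∈ I,
      Metric.closedBall (F μ φ) η ⊆ t φ := by
    refine (eventually_all_finite hI).2 fun φ _ ↦ ?_
    obtain ⟨r, hr, hrt⟩ := Metric.nhds_basis_closedBall.mem_iff.1 (ht φ)
    filter_upwards [Ioc_mem_nhdsGT hr] with η hη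
    exact (Metric.closedBall_subset_closedBall hη.2).trans hrt
  obtain ⟨η, hη, hη_pos⟩ := (eventually_ball_subset.and self_mem_nhdsWithin).exists
  exact ⟨hI.toFinset, η, hη_pos, fun ν hν ↦ hVU <| htV fun φ hφ ↦
    hη φ hφ <| by simpa [Real.dist_eq] using hν φ (hI.mem_toFinset.2 hφ)⟩

theorem exists_integral_eq_zero_forall_mem_of_norm_integral_le (μ : ProbabilityMeasure Ω)
    {U : Set (ProbabilityMeasure Ω)} (hU : U ∈ 𝓝 μ) :
    ∃ I : Finset (Ω →ᵇ ℝ), ∃ Ψ : Ω →ᵇ EuclideanSpace ℝ I, ∫ x, Ψ x ∂(μ : Measure Ω) = 0 ∧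
      ∃ η > 0, ∀ ν : ProbabilityMeasure Ω, ‖∫ x, Ψ x ∂(ν : Measure Ω)‖ ≤ η → ν ∈ U := by
  classical
  obtain ⟨I, η, hη, hIU⟩ := exists_finset_forall_mem_of_abs_integral_sub_le μ hU
  let c : (Ω →ᵇ ℝ) → ℝ := fun φ ↦ ∫ x, φ x ∂(μ : Measure Ω)
  let Ψ : Ω →ᵇ EuclideanSpace ℝ I := ∑ φ : I,
    (ContinuousLinearMap.toSpanSingleton ℝ
      (EuclideanSpace.single φ (1 : ℝ))).compLeftContinuousBounded Ω
        (φ - BoundedContinuousFunction.const Ω (c φ))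
  have Ψ_apply (x : Ω) (φ : I) : Ψ x φ = φ.1 x - c φ := by
    simp [Ψ, Finset.sum_apply, Pi.single_apply]
  have integral_Ψ (ν : ProbabilityMeasure Ω) (φ : I) :
      (∫ x, Ψ x ∂(ν : Measure Ω)) φ = ∫ x, φ.1 x ∂(ν : Measure Ω) - c φ := by
    have integrable_Ψ (ψ : I) : Integrable (Ψ · ψ) (ν : Measure Ω) := by
      simp only [Ψ_apply]
      exact (ψ.1.integrable _).sub (integrable_const _)
    rw [eval_integral_piLp integrable_Ψ]
    simp [Ψ_apply, integral_sub (φ.1.integrable _) (integrable_const _)]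
  refine ⟨I, Ψ, ?_, η, hη, fun ν hν ↦ hIU ν fun φ hφ ↦ ?_⟩
  · ext φ
    simp [integral_Ψ, c]
  · have := (PiLp.norm_apply_le (∫ x, Ψ x ∂(ν : Measure Ω)) ⟨φ, hφ⟩).trans hν
    rwa [integral_Ψ] at this

end WeakNeighborhoods

section Sampling

variable {Ω E : Type*} [MeasurableSpace Ω] [NormedAddCommGroup E] [InnerProductSpace ℝ E]
  [CompleteSpace E]

theorem exists_norm_sum_sq_le_of_integral_eq_zero {μ : Measure Ω} [IsProbabilityMeasure μ]
    {v : Ω → E} {B : ℝ} (hB : ∀ x, ‖v x‖ ≤ B) (hv : Integrable v μ) (h0 : ∫ x, v x ∂μ = 0)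
    (p : ℕ) : ∃ x : ℕ → Ω, ‖∑ k ∈ Finset.range p, v (x k)‖ ^ 2 ≤ p * B ^ 2 := by
  induction p with
  | zero => exact ⟨fun _ ↦ (nonempty_of_isProbabilityMeasure μ).some, by simp⟩
  | succ p ih =>
    obtain ⟨x, hx⟩ := ih
    set S : E := ∑ k ∈ Finset.range p, v (x k) with hS
    -- The inner product with the partial sum has mean zero, so it is nonpositive at some point.
    obtain ⟨y, hy⟩ := exists_le_integral (hv.const_inner (𝕜 := ℝ) S)
    rw [integral_inner hv, h0, inner_zero_right] at hy
    refine ⟨Function.update x p y, ?_⟩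
    have sum_update : ∑ k ∈ Finset.range (p + 1), v (Function.update x p y k) = S + v y := by
      rw [Finset.sum_range_succ, Function.update_self, hS]
      congr 1
      refine Finset.sum_congr rfl fun k hk ↦ ?_
      rw [Function.update_of_ne (Finset.mem_range.1 hk).ne]
    calc ‖∑ k ∈ Finset.range (p + 1), v (Function.update x p y k)‖ ^ 2
        = ‖S‖ ^ 2 + 2 * inner ℝ S (v y) + ‖v y‖ ^ 2 := by rw [sum_update, norm_add_sq_real]
      _ ≤ p * B ^ 2 + 2 * 0 + B ^ 2 := by gcongr; exact hB y
      _ = (p + 1 : ℕ) * B ^ 2 := by push_cast; ring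

end Sampling

section BirkhoffSum

variable {α E : Type*} [SeminormedAddCommGroup E] {f : α → α} {g : α → E} {B : ℝ}

theorem norm_birkhoffSum_le (hg : ∀ x, ‖g x‖ ≤ B) (n : ℕ) (x : α) :
    ‖birkhoffSum f g n x‖ ≤ n * B := by
  simpa [birkhoffSum] using norm_sum_le_of_le (Finset.range n) fun k _ ↦ hg (f^[k] x)

theorem norm_birkhoffSum_sub_birkhoffSum_le (hg : ∀ x, ‖g x‖ ≤ B) (m n : ℕ) (x : α) :
    ‖birkhoffSum f g m x - birkhoffSum f g n x‖ ≤ |(m : ℝ) - n| * B := by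
  wlog h : n ≤ m generalizing m n
  · rw [norm_sub_rev, abs_sub_comm]
    exact this n m (not_le.1 h).le
  obtain ⟨d, rfl⟩ := Nat.exists_eq_add_of_le h
  simpa [birkhoffSum_add] using norm_birkhoffSum_le hg d (f^[n] x)

theorem continuous_birkhoffSum [TopologicalSpace α] (hf : Continuous f) (hg : Continuous g)
    (n : ℕ) : Continuous (birkhoffSum f g n) :=
  continuous_finsetSum _ fun k _ ↦ hg.comp (hf.iterate k)

end BirkhoffSum

section IntegralBirkhoffSum

variable {α E : Type*} [MeasurableSpace α] [NormedAddCommGroup E] {f : α → α} {g : α → E}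
  {μ : Measure α}

theorem integrable_birkhoffSum (hf : MeasurePreserving f μ μ) (hg : Integrable g μ) (n : ℕ) :
    Integrable (birkhoffSum f g n) μ :=
  integrable_finsetSum _ fun k _ ↦ (hf.iterate k).integrable_comp_of_integrable hg

theorem integral_birkhoffSum [NormedSpace ℝ E] (hf : MeasurePreserving f μ μ)
    (hg : Integrable g μ) (n : ℕ) :
    ∫ x, birkhoffSum f g n x ∂μ = n • ∫ x, g x ∂μ := by
  have integral_comp_iterate (k : ℕ) : ∫ x, g (f^[k] x) ∂μ = ∫ x, g x ∂μ := by
    have hk := hf.iterate k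
    conv_rhs => rw [← hk.map_eq]
    exact (integral_map hk.aemeasurable (hk.map_eq.symm ▸ hg.aestronglyMeasurable)).symm
  have integrable_comp_iterate (k : ℕ) : Integrable (fun x ↦ g (f^[k] x)) μ :=
    (hf.iterate k).integrable_comp_of_integrable hg
  simp [birkhoffSum, integral_finsetSum _ fun k _ ↦ integrable_comp_iterate k,
    integral_comp_iterate]

theorem norm_integral_le_of_norm_birkhoffSum_le [NormedSpace ℝ E] [IsProbabilityMeasure μ]
    (hf : MeasurePreserving f μ μ) (hg : Integrable g μ) {n : ℕ} (hn : 0 < n) {η : ℝ}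
    (h : ∀ᵐ x ∂μ, ‖birkhoffSum f g n x‖ ≤ n * η) : ‖∫ x, g x ∂μ‖ ≤ η := by
  have hn' : (0 : ℝ) < n := Nat.cast_pos.2 hn
  have norm_nsmul_le := norm_integral_le_of_norm_le_const h
  rw [integral_birkhoffSum hf hg, ← Nat.cast_smul_eq_nsmul ℝ, norm_smul, probReal_univ, mul_one,
    Real.norm_natCast] at norm_nsmul_le
  exact le_of_mul_le_mul_left norm_nsmul_le hn'

theorem norm_integral_le_of_measure_closure_eq_one [TopologicalSpace α] [OpensMeasurableSpace α]
    [NormedSpace ℝ E] [IsProbabilityMeasure μ] (hf : MeasurePreserving f μ μ)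
    (hf_cont : Continuous f) (hg_cont : Continuous g) (hg : Integrable g μ) {s : Set α}
    (hs : μ (closure s) = 1) {n : ℕ} (hn : 0 < n) {η : ℝ}
    (h : ∀ x ∈ s, ‖birkhoffSum f g n x‖ ≤ n * η) : ‖∫ x, g x ∂μ‖ ≤ η := by
  have closure_subset : closure s ⊆ {x | ‖birkhoffSum f g n x‖ ≤ n * η} :=
    closure_minimal h <|
      isClosed_le (continuous_birkhoffSum hf_cont hg_cont n).norm continuous_const
  refine norm_integral_le_of_norm_birkhoffSum_le hf hg hn ?_
  filter_upwards [(prob_compl_eq_zero_iff isClosed_closure.measurableSet).2 hs] with x hx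
  exact closure_subset hx

theorem exists_periodic_norm_sum_birkhoffSum_sq_le [InnerProductSpace ℝ E] [CompleteSpace E]
    [IsProbabilityMeasure μ] (hf : MeasurePreserving f μ μ) (hg : Integrable g μ)
    {B : ℝ} (hgB : ∀ x, ‖g x‖ ≤ B) (h0 : ∫ x, g x ∂μ = 0) (n p : ℕ) :
    ∃ C : ℕ → α, Periodic C p ∧
      ‖∑ k ∈ Finset.range p, birkhoffSum f g n (C k)‖ ^ 2 ≤ p * (n * B) ^ 2 := by
  obtain ⟨x, hx⟩ := exists_norm_sum_sq_le_of_integral_eq_zero (norm_birkhoffSum_le hgB n)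
    (integrable_birkhoffSum hf hg n) (by rw [integral_birkhoffSum hf hg, h0, smul_zero]) p
  refine ⟨fun k ↦ x (k % p), (Nat.periodic_mod p).comp x, ?_⟩
  have sum_mod : ∑ k ∈ Finset.range p, birkhoffSum f g n (x (k % p)) =
      ∑ k ∈ Finset.range p, birkhoffSum f g n (x k) :=
    Finset.sum_congr rfl fun k hk ↦ by rw [Nat.mod_eq_of_lt (Finset.mem_range.1 hk)]
  rwa [sum_mod]

end IntegralBirkhoffSum

section Blocks

/-- For a strictly increasing `s` with `s 0 = 0`, the index `k` of the block `[s k, s (k + 1))`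
containing the time `T`. Since `k ≤ s k`, the search may stop at `T`. -/
def blockIndex (s : ℕ → ℕ) (T : ℕ) : ℕ :=
  Nat.findGreatest (fun k ↦ s k ≤ T) T

variable {s : ℕ → ℕ} {T k : ℕ}

theorem start_blockIndex_le (h0 : s 0 = 0) (T : ℕ) : s (blockIndex s T) ≤ T :=
  Nat.findGreatest_spec (P := fun k ↦ s k ≤ T) (Nat.zero_le T) (h0.trans_le (Nat.zero_le T))

theorem lt_start_blockIndex_succ (hs : StrictMono s) (T : ℕ) : T < s (blockIndex s T + 1) := by
  by_contra! h
  have : blockIndex s T + 1 ≤ blockIndex s T := Nat.le_findGreatest (hs.le_apply.trans h) h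
  omega

theorem blockIndex_eq (h0 : s 0 = 0) (hs : StrictMono s) (hk : s k ≤ T) (hk' : T < s (k + 1)) :
    blockIndex s T = k := by
  have h₁ := hs.lt_iff_lt.1 ((start_blockIndex_le h0 T).trans_lt hk')
  have h₂ := hs.lt_iff_lt.1 (hk.trans_lt (lt_start_blockIndex_succ hs T))
  omega

/-- The times `s k` cut `ℕ` into blocks `[s k, s (k + 1))`, each made of `n` times reserved for an
orbit segment followed by a gap of length at most `δ * n`. -/
structure IsBlockSequence (s : ℕ → ℕ) (n : ℕ) (δ : ℝ) : Prop where
  zero : s 0 = 0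
  add_le (k : ℕ) : s k + n ≤ s (k + 1)
  le_add (k : ℕ) : (s (k + 1) : ℝ) ≤ s k + n + δ * n

theorem isBlockSequence_segStart {t : ℕ → ℕ} {n : ℕ} {δ : ℝ} (ht : ∀ k, 0 < t k)
    (htδ : ∀ k, (t k : ℝ) ≤ 1 + δ * n) : IsBlockSequence (segStart (fun _ ↦ n) t) n δ := by
  have succ (k : ℕ) :
      segStart (fun _ ↦ n) t (k + 1) + 1 = segStart (fun _ ↦ n) t k + n + t k := by
    have := ht k
    simp only [segStart, Finset.sum_range_succ]
    omega
  refine ⟨by simp [segStart], fun k ↦ ?_, fun k ↦ ?_⟩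
  · have := succ k
    have := ht k
    omega
  · have succ_cast := congrArg (Nat.cast (R := ℝ)) (succ k)
    push_cast at succ_cast
    linarith [htδ k]

namespace IsBlockSequence

variable {n : ℕ} {δ : ℝ}

theorem strictMono (hs : IsBlockSequence s n δ) (hn : 0 < n) : StrictMono s :=
  strictMono_nat_of_lt_succ fun k ↦ (Nat.lt_add_of_pos_right hn).trans_le (hs.add_le k)

theorem add_mul_le (hs : IsBlockSequence s n δ) (k q : ℕ) : s k + q * n ≤ s (k + q) := by
  induction q with
  | zero => simp
  | succ q ih =>
    calc s k + (q + 1) * n = s k + q * n + n := by ring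
      _ ≤ s (k + q) + n := Nat.add_le_add_right ih n
      _ ≤ s (k + (q + 1)) := hs.add_le (k + q)

theorem le_add_mul (hs : IsBlockSequence s n δ) (k q : ℕ) :
    (s (k + q) : ℝ) ≤ s k + q * n + δ * (q * n) := by
  induction q with
  | zero => simp
  | succ q ih =>
    rw [← add_assoc]
    push_cast
    linarith [hs.le_add (k + q)]

theorem succ_le_add_two_mul (hs : IsBlockSequence s n δ) (hδ : δ ≤ 1) (k : ℕ) :
    s (k + 1) ≤ s k + 2 * n := by
  have : (s (k + 1) : ℝ) ≤ s k + 2 * n := by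
    linarith [hs.le_add k, mul_le_mul_of_nonneg_right hδ n.cast_nonneg]
  exact_mod_cast this

end IsBlockSequence

end Blocks

section ConcatOrbit

variable {α : Type*} {f : α → α} {C : ℕ → α} {s : ℕ → ℕ} {n p : ℕ} {δ : ℝ}

/-- The concatenation of orbits which restarts at the point `C k` at each time `s k`. -/
def concatOrbit (f : α → α) (C : ℕ → α) (s : ℕ → ℕ) (T : ℕ) : α :=
  f^[T - s (blockIndex s T)] (C (blockIndex s T))

theorem concatOrbit_eq {T k : ℕ} (h0 : s 0 = 0) (hs : StrictMono s) (hk : s k ≤ T)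
    (hk' : T < s (k + 1)) : concatOrbit f C s T = f^[T - s k] (C k) := by
  rw [concatOrbit, blockIndex_eq h0 hs hk hk']

-- A window of length `n` meets at most two blocks, so it is determined by the residue of the first
-- block index and by the distances from its left end to the two ends of that block.
theorem exists_label_concatOrbit (hs : IsBlockSequence s n δ) (hδ : δ ≤ 1) (hn : 0 < n)
    (hp : 0 < p) (hC : Periodic C p) (f : α → α) :
    ∃ label : ℕ → Fin p × Fin (2 * n + 1) × Fin (2 * n + 1), ∀ S S', label S = label S' →
      ∀ j < n, concatOrbit f C s (S + j) = concatOrbit f C s (S' + j) := by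
  have hmono := hs.strictMono hn
  have start_le := start_blockIndex_le hs.zero
  have lt_next := lt_start_blockIndex_succ hmono
  have C_congr {k k' : ℕ} (h : k ≡ k' [MOD p]) : C k = C k' := by
    rw [← hC.map_mod_nat k, h, hC.map_mod_nat]
  refine ⟨fun S ↦ (⟨blockIndex s S % p, Nat.mod_lt _ hp⟩,
    ⟨S - s (blockIndex s S), ?_⟩, ⟨s (blockIndex s S + 1) - S, ?_⟩), fun S S' h j hj ↦ ?_⟩
  · have := hs.succ_le_add_two_mul hδ (blockIndex s S)
    have := lt_next S
    omega
  · have := hs.succ_le_add_two_mul hδ (blockIndex s S)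
    have := start_le S
    omega
  simp only [Prod.mk.injEq, Fin.mk.injEq] at h
  obtain ⟨index_eq, start_eq, next_eq⟩ := h
  have := start_le S
  have := start_le S'
  have := lt_next S
  have := lt_next S'
  by_cases hjS : S + j < s (blockIndex s S + 1)
  · have start_eq_add : S + j - s (blockIndex s S) = S' + j - s (blockIndex s S') := by omega
    rw [concatOrbit_eq hs.zero hmono (k := blockIndex s S) (by omega) hjS,
      concatOrbit_eq hs.zero hmono (k := blockIndex s S') (by omega) (by omega), C_congr index_eq,
      start_eq_add]
  · have := hs.add_le (blockIndex s S + 1)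
    have := hs.add_le (blockIndex s S' + 1)
    have next_eq_add : S + j - s (blockIndex s S + 1) = S' + j - s (blockIndex s S' + 1) := by
      omega
    rw [concatOrbit_eq hs.zero hmono (k := blockIndex s S + 1) (by omega) (by omega),
      concatOrbit_eq hs.zero hmono (k := blockIndex s S' + 1) (by omega) (by omega),
      C_congr (Nat.ModEq.add_right 1 index_eq), next_eq_add]

end ConcatOrbit

section Sums

theorem sum_range_add_of_periodic {M : Type*} [AddCommMonoid M] {F : ℕ → M} {p : ℕ}
    (hF : Periodic F p) (a : ℕ) :
    ∑ k ∈ Finset.range p, F (a + k) = ∑ k ∈ Finset.range p, F k := by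
  have multiset_map := congrArg (fun m ↦ (m.map F).sum) (Nat.multiset_Ico_map_mod a p)
  simp only [Multiset.map_map, comp_def, hF.map_mod_nat] at multiset_map
  have sum_Ico := Finset.sum_Ico_eq_sum_range F a (a + p)
  rw [Nat.add_sub_cancel_left] at sum_Ico
  exact sum_Ico.symm.trans multiset_map

theorem norm_sum_sub_sum_le_of_card_filter_le {ι E : Type*} [SeminormedAddCommGroup E]
    {u v : ι → E} {A : Finset ι} {bad : ι → Prop} [DecidablePred bad] {D e K : ℝ} (hD : 0 ≤ D)
    (he : 0 ≤ e) (hbound : ∀ i ∈ A, ‖u i - v i‖ ≤ D)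
    (hgood : ∀ i ∈ A, ¬ bad i → ‖u i - v i‖ ≤ e) (hbad : ((A.filter bad).card : ℝ) ≤ K) :
    ‖∑ i ∈ A, u i - ∑ i ∈ A, v i‖ ≤ A.card * e + K * D := by
  rw [← Finset.sum_sub_distrib]
  calc ‖∑ i ∈ A, (u i - v i)‖ ≤ ∑ i ∈ A, (e + if bad i then D else 0) := by
        refine norm_sum_le_of_le _ fun i hi ↦ ?_
        split_ifs with h
        · linarith [hbound i hi]
        · linarith [hgood i hi h]
    _ = A.card * e + (A.filter bad).card * D := by
        simp [Finset.sum_add_distrib, ← Finset.sum_filter]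
    _ ≤ A.card * e + K * D := by gcongr

end Sums

namespace Traced

variable {E : Type*} [SeminormedAddCommGroup E] {f : X → X} {C : ℕ → X}
  {t : ℕ → ℕ} {n : ℕ} {δ ε : ℝ} {z : X}

theorem card_filter_block_le (hz : Traced f C (fun _ ↦ n) t δ ε z)
    (hs : IsBlockSequence (segStart (fun _ ↦ n) t) n δ) (hn : 0 < n) (k : ℕ) :
    (((Finset.Ico (segStart (fun _ ↦ n) t k) (segStart (fun _ ↦ n) t (k + 1))).filter fun T ↦
      ε < dist (f^[T] z) (concatOrbit f C (segStart (fun _ ↦ n) t) T)).card : ℝ) ≤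
      2 * (δ * n) := by
  set s := segStart (fun _ ↦ n) t
  let bad : Finset ℕ :=
    {j ∈ Finset.range n | ε < dist (f^[s k + j] z) (f^[j] (C k))}
  have filter_subset : (Finset.Ico (s k) (s (k + 1))).filter (fun T ↦
      ε < dist (f^[T] z) (concatOrbit f C s T)) ⊆
      bad.image (s k + ·) ∪ Finset.Ico (s k + n) (s (k + 1)) := by
    intro T hT
    obtain ⟨hT_mem, hT_far⟩ := Finset.mem_filter.1 hT
    obtain ⟨hkT, hTk⟩ := Finset.mem_Ico.1 hT_mem
    rw [concatOrbit_eq hs.zero (hs.strictMono hn) hkT hTk] at hT_far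
    by_cases h : T < s k + n
    · refine Finset.mem_union_left _ (Finset.mem_image.2 ⟨T - s k, ?_, by omega⟩)
      rw [Finset.mem_filter, Finset.mem_range, Nat.add_sub_cancel' hkT]
      exact ⟨by omega, hT_far⟩
    · exact Finset.mem_union_right _ (Finset.mem_Ico.2 ⟨not_lt.1 h, hTk⟩)
  have card_gap : ((s (k + 1) - (s k + n) : ℕ) : ℝ) ≤ δ * n := by
    rw [Nat.cast_sub (hs.add_le k)]
    push_cast
    linarith [hs.le_add k]
  have card_le := (Finset.card_le_card filter_subset).trans <| (Finset.card_union_le _ _).trans <|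
    Nat.add_le_add_right Finset.card_image_le _
  rw [Nat.card_Ico] at card_le
  calc _ ≤ (bad.card : ℝ) + (s (k + 1) - (s k + n) : ℕ) := by exact_mod_cast card_le
    _ ≤ δ * n + δ * n := add_le_add (hz k) card_gap
    _ = 2 * (δ * n) := by ring

theorem card_filter_window_le (hz : Traced f C (fun _ ↦ n) t δ ε z)
    (hs : IsBlockSequence (segStart (fun _ ↦ n) t) n δ) (hn : 0 < n) (S : ℕ) :
    (((Finset.Ico S (S + n)).filter fun T ↦
      ε < dist (f^[T] z) (concatOrbit f C (segStart (fun _ ↦ n) t) T)).card : ℝ) ≤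
      4 * (δ * n) := by
  set s := segStart (fun _ ↦ n) t
  set k := blockIndex s S
  have hkS : s k ≤ S := start_blockIndex_le hs.zero S
  have hSk : S < s (k + 1) := lt_start_blockIndex_succ (hs.strictMono hn) S
  have window_subset : Finset.Ico S (S + n) ⊆
      Finset.Ico (s k) (s (k + 1)) ∪ Finset.Ico (s (k + 1)) (s (k + 1 + 1)) := by
    have := hs.add_le (k + 1)
    intro T hT
    simp only [Finset.mem_union, Finset.mem_Ico] at hT ⊢
    omega
  have card_le := Finset.card_le_card (Finset.filter_subset_filter
    (fun T ↦ ε < dist (f^[T] z) (concatOrbit f C s T)) window_subset)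
  rw [Finset.filter_union] at card_le
  calc _ ≤ 2 * (δ * n) + 2 * (δ * n) :=
        (Nat.cast_le.2 (card_le.trans (Finset.card_union_le _ _))).trans <| by
          push_cast
          exact add_le_add (hz.card_filter_block_le hs hn k) (hz.card_filter_block_le hs hn (k + 1))
    _ = 4 * (δ * n) := by ring

variable {g : X → E} {B e : ℝ}

theorem norm_birkhoffSum_block_sub_le (hz : Traced f C (fun _ ↦ n) t δ ε z)
    (hs : IsBlockSequence (segStart (fun _ ↦ n) t) n δ) (hgB : ∀ x, ‖g x‖ ≤ B) (he : 0 ≤ e)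
    (hge : ∀ x y, dist x y ≤ ε → ‖g x - g y‖ ≤ e) (k : ℕ) :
    ‖birkhoffSum f g (segStart (fun _ ↦ n) t (k + 1)) z -
      birkhoffSum f g (segStart (fun _ ↦ n) t k) z - birkhoffSum f g n (C k)‖ ≤
      n * e + 3 * (δ * n * B) := by
  set s := segStart (fun _ ↦ n) t
  have hB : 0 ≤ B := (norm_nonneg _).trans (hgB z)
  obtain ⟨gap, hgap⟩ := Nat.exists_eq_add_of_le (hs.add_le k)
  have gap_le : (gap : ℝ) ≤ δ * n := by
    have := hs.le_add k
    rw [hgap] at this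
    push_cast at this
    linarith
  have norm_segment_le :
      ‖birkhoffSum f g n (f^[s k] z) - birkhoffSum f g n (C k)‖ ≤ n * e + δ * n * (2 * B) := by
    have := norm_sum_sub_sum_le_of_card_filter_le (A := Finset.range n)
      (u := fun j ↦ g (f^[j] (f^[s k] z))) (v := fun j ↦ g (f^[j] (C k)))
      (bad := fun j ↦ ε < dist (f^[s k + j] z) (f^[j] (C k))) (by positivity : 0 ≤ 2 * B) he
      (fun j _ ↦ (norm_sub_le _ _).trans (by linarith [hgB (f^[j] (f^[s k] z)), hgB (f^[j] (C k))]))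
      (fun j _ hj ↦ hge _ _ <| by rwa [not_lt, add_comm, iterate_add_apply] at hj) (hz k)
    rwa [Finset.card_range] at this
  have decomposition : birkhoffSum f g (s (k + 1)) z - birkhoffSum f g (s k) z -
      birkhoffSum f g n (C k) = (birkhoffSum f g n (f^[s k] z) - birkhoffSum f g n (C k)) +
        birkhoffSum f g gap (f^[s k + n] z) := by
    rw [hgap, birkhoffSum_add, birkhoffSum_add]
    abel
  calc _ ≤ (n * e + δ * n * (2 * B)) + gap * B := by
        rw [decomposition]
        exact norm_add_le_of_le norm_segment_le (norm_birkhoffSum_le hgB gap _)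
    _ ≤ (n * e + δ * n * (2 * B)) + δ * n * B := by gcongr
    _ = n * e + 3 * (δ * n * B) := by ring

theorem norm_birkhoffSum_blocks_sub_le (hz : Traced f C (fun _ ↦ n) t δ ε z)
    (hs : IsBlockSequence (segStart (fun _ ↦ n) t) n δ) (hgB : ∀ x, ‖g x‖ ≤ B) (he : 0 ≤ e)
    (hge : ∀ x y, dist x y ≤ ε → ‖g x - g y‖ ≤ e) (a p : ℕ) :
    ‖birkhoffSum f g (segStart (fun _ ↦ n) t (a + p)) z -
      birkhoffSum f g (segStart (fun _ ↦ n) t a) z -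
      ∑ k ∈ Finset.range p, birkhoffSum f g n (C (a + k))‖ ≤
      p * (n * e + 3 * (δ * n * B)) := by
  have telescope := Finset.sum_range_sub
    (fun k ↦ birkhoffSum f g (segStart (fun _ ↦ n) t (a + k)) z) p
  rw [add_zero] at telescope
  rw [← telescope, ← Finset.sum_sub_distrib]
  refine (norm_sum_le_of_le (Finset.range p) fun k _ ↦
    hz.norm_birkhoffSum_block_sub_le hs hgB he hge (a + k)).trans_eq ?_
  rw [Finset.sum_const, Finset.card_range, nsmul_eq_mul]

theorem norm_birkhoffSum_window_le (hz : Traced f C (fun _ ↦ n) t δ ε z)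
    (hs : IsBlockSequence (segStart (fun _ ↦ n) t) n δ) (hδ : δ ≤ 1) (hn : 0 < n)
    (hgB : ∀ x, ‖g x‖ ≤ B) (he : 0 ≤ e) (hge : ∀ x y, dist x y ≤ ε → ‖g x - g y‖ ≤ e) {p : ℕ}
    (hC : Periodic C p) (S : ℕ) :
    ‖birkhoffSum f g (p * n) (f^[S] z)‖ ≤ p * n * e + 4 * (δ * (p * n) * B) + 4 * (n * B) +
      ‖∑ k ∈ Finset.range p, birkhoffSum f g n (C k)‖ := by
  set s := segStart (fun _ ↦ n) t
  set a := blockIndex s S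
  have hB : 0 ≤ B := (norm_nonneg _).trans (hgB z)
  have haS : (s a : ℝ) ≤ S := by exact_mod_cast start_blockIndex_le hs.zero S
  have hSa : (S : ℝ) < s (a + 1) := by
    exact_mod_cast lt_start_blockIndex_succ (hs.strictMono hn) S
  have succ_le : (s (a + 1) : ℝ) ≤ s a + 2 * n := by exact_mod_cast hs.succ_le_add_two_mul hδ a
  have add_mul_le : (s a + p * n : ℝ) ≤ s (a + p) := by exact_mod_cast hs.add_mul_le a p
  have le_add_mul := hs.le_add_mul a p
  have dist_left : |(s a : ℝ) - S| ≤ 2 * n := abs_le.2 ⟨by linarith, by linarith⟩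
  have dist_right : |((S + p * n : ℕ) : ℝ) - s (a + p)| ≤ 2 * n + δ * (p * n) := by
    push_cast
    exact abs_le.2 ⟨by linarith, by linarith⟩
  have sum_periodic : ∑ k ∈ Finset.range p, birkhoffSum f g n (C (a + k)) =
      ∑ k ∈ Finset.range p, birkhoffSum f g n (C k) :=
    sum_range_add_of_periodic (hC.comp (birkhoffSum f g n)) a
  have decomposition : birkhoffSum f g (p * n) (f^[S] z) =
      (birkhoffSum f g (S + p * n) z - birkhoffSum f g (s (a + p)) z) +
      (birkhoffSum f g (s a) z - birkhoffSum f g S z) +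
      (birkhoffSum f g (s (a + p)) z - birkhoffSum f g (s a) z -
        ∑ k ∈ Finset.range p, birkhoffSum f g n (C (a + k))) +
      ∑ k ∈ Finset.range p, birkhoffSum f g n (C k) := by
    rw [sum_periodic, birkhoffSum_add]
    abel
  calc _ ≤ (2 * n + δ * (p * n)) * B + 2 * n * B + p * (n * e + 3 * (δ * n * B)) +
        ‖∑ k ∈ Finset.range p, birkhoffSum f g n (C k)‖ := by
        rw [decomposition]
        refine norm_add₄_le.trans ?_
        gcongr
        · exact (norm_birkhoffSum_sub_birkhoffSum_le hgB _ _ z).trans (by gcongr)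
        · exact (norm_birkhoffSum_sub_birkhoffSum_le hgB _ _ z).trans (by gcongr)
        · exact hz.norm_birkhoffSum_blocks_sub_le hs hgB he hge a p
    _ = _ := by ring

end Traced

section SparseWords

/-- Words of length `n` in which at most `K` positions carry a letter of `α`; the other positions
are left blank, encoded by `none`. -/
abbrev SparseWord (n : ℕ) (α : Type*) (K : ℝ) : Type _ :=
  {w : Fin n → Option α // ((Finset.univ.filter fun j ↦ (w j).isSome).card : ℝ) ≤ K}

theorem sum_pow_card_filter_isSome {α : Type*} [Fintype α] (n : ℕ) (θ : ℝ) :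
    ∑ w : Fin n → Option α, θ ^ (Finset.univ.filter fun j ↦ (w j).isSome).card =
      (1 + Fintype.card α * θ) ^ n := by
  classical
  have prod_sum := Finset.prod_univ_sum (fun _ : Fin n ↦ (Finset.univ : Finset (Option α)))
    (fun _ o ↦ if o.isSome then θ else 1)
  simpa [Fintype.sum_option, Finset.prod_ite] using prod_sum.symm

-- Markov's inequality for the weight `θ ^ #letters`.
theorem card_sparseWord_le {α : Type*} [Finite α] (n : ℕ) (K : ℝ) {θ : ℝ} (hθ : 0 < θ)
    (hθ1 : θ ≤ 1) :
    (Nat.card (SparseWord n α K) : ℝ) ≤ θ ^ (-K) * (1 + Nat.card α * θ) ^ n := by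
  classical
  have := Fintype.ofFinite α
  let letters (w : Fin n → Option α) : ℕ := (Finset.univ.filter fun j ↦ (w j).isSome).card
  have one_le_weight {w} (hw : (letters w : ℝ) ≤ K) : 1 ≤ θ ^ (-K) * θ ^ letters w := by
    rw [← Real.rpow_natCast, ← Real.rpow_add hθ]
    exact Real.one_le_rpow_of_pos_of_le_one_of_nonpos hθ hθ1 (by linarith)
  calc (Nat.card (SparseWord n α K) : ℝ)
      = ∑ w with (letters w : ℝ) ≤ K, 1 := by
        rw [Nat.card_eq_fintype_card, Fintype.card_subtype, Finset.card_eq_sum_ones, Nat.cast_sum,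
          Nat.cast_one]
    _ ≤ ∑ w with (letters w : ℝ) ≤ K, θ ^ (-K) * θ ^ letters w :=
        Finset.sum_le_sum fun w hw ↦ one_le_weight (Finset.mem_filter.1 hw).2
    _ ≤ ∑ w, θ ^ (-K) * θ ^ letters w :=
        Finset.sum_le_sum_of_subset_of_nonneg (Finset.filter_subset _ _) fun _ _ _ ↦ by positivity
    _ = θ ^ (-K) * (1 + Nat.card α * θ) ^ n := by
        rw [← Finset.mul_sum, sum_pow_card_filter_isSome, Nat.card_eq_fintype_card]

theorem exists_card_sparseWord_le_exp (α : Type*) [Finite α] {b : ℝ} (hb : 0 < b) :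
    ∃ κ > 0, ∀ (n : ℕ) (K : ℝ), K ≤ κ * n →
      (Nat.card (SparseWord n α K) : ℝ) ≤ Real.exp (b * n) := by
  set r := (Nat.card α : ℝ)
  obtain ⟨θ₀, hθ₀, mul_θ₀_lt⟩ := exists_pos_mul_lt (half_pos hb) r
  set θ := min 1 θ₀
  have hθ : 0 < θ := lt_min one_pos hθ₀
  have hθ1 : θ ≤ 1 := min_le_left _ _
  have log_nonpos : Real.log θ ≤ 0 := Real.log_nonpos hθ.le hθ1
  obtain ⟨κ, hκ, neg_log_mul_lt⟩ := exists_pos_mul_lt (half_pos hb) (-Real.log θ)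
  refine ⟨κ, hκ, fun n K hK ↦ ?_⟩
  have rpow_le : θ ^ (-K) ≤ Real.exp (b / 2 * n) := by
    rw [Real.rpow_def_of_pos hθ, Real.exp_le_exp]
    calc Real.log θ * -K = -Real.log θ * K := by ring
      _ ≤ -Real.log θ * (κ * n) := by gcongr; linarith
      _ = -Real.log θ * κ * n := by ring
      _ ≤ b / 2 * n := by gcongr
  have mul_θ_le : r * θ ≤ b / 2 :=
    (mul_le_mul_of_nonneg_left (min_le_right 1 θ₀) (Nat.cast_nonneg _)).trans mul_θ₀_lt.le
  have pow_le : (1 + r * θ) ^ n ≤ Real.exp (b / 2 * n) := by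
    calc (1 + r * θ) ^ n ≤ Real.exp (b / 2) ^ n := by
          gcongr
          linarith [Real.add_one_le_exp (b / 2)]
      _ = Real.exp (b / 2 * n) := by rw [← Real.exp_nat_mul, mul_comm]
  calc (Nat.card (SparseWord n α K) : ℝ)
      ≤ θ ^ (-K) * (1 + r * θ) ^ n := card_sparseWord_le n K hθ hθ1
    _ ≤ Real.exp (b / 2 * n) * Real.exp (b / 2 * n) := by gcongr
    _ = Real.exp (b * n) := by rw [← Real.exp_add]; ring_nf

end SparseWords

theorem eventually_mul_two_mul_add_one_sq_le_exp (c : ℝ) {b : ℝ} (hb : 0 < b) :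
    ∀ᶠ n : ℕ in atTop, c * (2 * n + 1) ^ 2 ≤ Real.exp (b * n) := by
  have sq_isLittleO := (isLittleO_pow_exp_pos_mul_atTop 2 hb).comp_tendsto
    tendsto_natCast_atTop_atTop
  filter_upwards [sq_isLittleO.bound (c := 1 / (9 * (|c| + 1))) (by positivity),
    eventually_ge_atTop 1] with n hn one_le
  simp only [comp_apply, Real.norm_eq_abs, Real.abs_exp, abs_pow, Nat.abs_cast] at hn
  rw [div_mul_eq_mul_div, le_div_iff₀ (by positivity), one_mul] at hn
  have one_le' : (1 : ℝ) ≤ n := Nat.one_le_cast.2 one_le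
  calc c * (2 * n + 1) ^ 2 ≤ (|c| + 1) * (3 * n) ^ 2 := by
        gcongr
        · linarith [le_abs_self c]
        · linarith
    _ = n ^ 2 * (9 * (|c| + 1)) := by ring
    _ ≤ Real.exp (b * n) := hn

section Codes

theorem exists_coloring_dist_le (α : Type*) [PseudoMetricSpace α] [CompactSpace α] {ε : ℝ}
    (hε : 0 < ε) : ∃ (r : ℕ) (color : α → Fin r), ∀ x y, color x = color y → dist x y ≤ ε := by
  obtain ⟨centers, -, hfin, hcover⟩ :=
    Metric.finite_approx_of_totallyBounded (isCompact_univ (X := α)).totallyBounded _ (half_pos hε)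
  have exists_center (x : α) : ∃ c : centers, dist x c < ε / 2 := by
    simpa using hcover (mem_univ x)
  choose center dist_center using exists_center
  have := hfin.to_subtype
  obtain ⟨r, ⟨e⟩⟩ := Finite.exists_equiv_fin centers
  refine ⟨r, fun x ↦ e (center x), fun x y hxy ↦ ?_⟩
  have hy := dist_center y
  rw [← e.injective hxy] at hy
  linarith [dist_triangle_right x y (center x : α), dist_center x]

-- The word records the colours of `u` at the times where `u` strays from `v`; everywhere else `u`
-- is pinned down by `v`, hence by the label.
theorem exists_code_of_card_filter_le {α L ι : Type*} [PseudoMetricSpace α] {u v : ℕ → α} {n : ℕ}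
    {ε ε' K : ℝ} (hε : 2 * ε' ≤ ε) {label : ℕ → L}
    (hlabel : ∀ S S', label S = label S' → ∀ j < n, v (S + j) = v (S' + j)) {color : α → ι}
    (hcolor : ∀ x y, color x = color y → dist x y ≤ ε)
    (hbad : ∀ S, (((Finset.Ico S (S + n)).filter fun T ↦ ε' < dist (u T) (v T)).card : ℝ) ≤ K) :
    ∃ code : ℕ → L × SparseWord n ι K, ∀ S S', code S = code S' →
      ∀ j < n, dist (u (S + j)) (u (S' + j)) ≤ ε := by
  let word (S : ℕ) (j : Fin n) : Option ι :=
    if ε' < dist (u (S + j)) (v (S + j)) then some (color (u (S + j))) else none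
  have word_sparse (S : ℕ) : ((Finset.univ.filter fun j ↦ (word S j).isSome).card : ℝ) ≤ K := by
    refine le_trans (Nat.cast_le.2 ?_) (hbad S)
    refine Finset.card_le_card_of_injOn (fun j ↦ S + j) (fun j hj ↦ ?_) fun i _ j _ hij ↦ ?_
    · simpa [word] using hj
    · exact Fin.ext (Nat.add_left_cancel hij)
  refine ⟨fun S ↦ (label S, ⟨word S, word_sparse S⟩), fun S S' h j hj ↦ ?_⟩
  obtain ⟨label_eq, word_eq⟩ := Prod.mk.inj h
  have letter_eq := congrFun (Subtype.mk.inj word_eq) ⟨j, hj⟩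
  simp only [word] at letter_eq
  split_ifs at letter_eq with hS hS' hS'
  · exact hcolor _ _ (Option.some.inj letter_eq)
  · rw [not_lt] at hS hS'
    rw [← hlabel S S' label_eq j hj] at hS'
    linarith [dist_triangle_right (u (S + j)) (u (S' + j)) (v (S + j))]

theorem exists_code_closure_range {ι α W : Type*} [TopologicalSpace α] [Finite W] {u : ι → α}
    {R : Set (α × α)} (hR : IsClosed R) {code : ι → W}
    (hcode : ∀ i j, code i = code j → (u i, u j) ∈ R) :
    ∃ code' : closure (range u) → W, ∀ x y, code' x = code' y → (x.1, y.1) ∈ R := by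
  have exists_mem_closure (x : closure (range u)) : ∃ w, x.1 ∈ closure (u '' (code ⁻¹' {w})) := by
    rw [← mem_iUnion, ← closure_iUnion_of_finite, ← image_iUnion, ← preimage_iUnion,
      iUnion_of_singleton, preimage_univ, image_univ]
    exact x.2
  choose code' hcode' using exists_mem_closure
  refine ⟨code', fun x y hxy ↦ ?_⟩
  set A := u '' (code ⁻¹' {code' x})
  have prod_subset : A ×ˢ A ⊆ R := by
    rintro ⟨_, _⟩ ⟨⟨i, hi, rfl⟩, ⟨j, hj, rfl⟩⟩
    exact hcode i j (hi.trans hj.symm)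
  have mem_closure_prod : (x.1, y.1) ∈ closure (A ×ˢ A) := by
    rw [closure_prod_eq]
    refine ⟨hcode' x, ?_⟩
    simpa only [A, hxy] using hcode' y
  exact closure_minimal prod_subset hR mem_closure_prod

theorem isClosed_dynEntourage {α : Type*} [TopologicalSpace α] {f : α → α} (hf : Continuous f)
    {R : Set (α × α)} (hR : IsClosed R) (n : ℕ) : IsClosed (dynEntourage f R n) :=
  isClosed_iInter fun k ↦ isClosed_iInter fun _ ↦ hR.preimage ((hf.prodMap hf).iterate k)

end Codes

section Entropy

variable {W : Type*} [Finite W] {f : X → X} {K : Set X} {n : ℕ} {ε : ℝ}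
  {code : K → W}

theorem sepNum_le_card_pow (hK : MapsTo f K K) (hn : 0 < n)
    (hcode : ∀ x y, code x = code y → (x.1, y.1) ∈ dynEntourage f {q | dist q.1 q.2 ≤ ε} n)
    (N : ℕ) : sepNum f K N ε ≤ Nat.card W ^ (N / n + 1) := by
  refine csSup_le' ?_
  rintro _ ⟨S, hSK, rfl, hS⟩
  let itinerary (x : S) (i : Fin (N / n + 1)) : W :=
    code ⟨f^[i * n] x, hK.iterate (i * n) (hSK x.2)⟩
  have itinerary_injective : Injective itinerary := by
    intro x y hxy
    by_contra hne
    obtain ⟨j, hj, hfar⟩ := hS x x.2 y y.2 (Subtype.coe_ne_coe.2 hne)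
    have hjn : j / n < N / n + 1 := Nat.lt_succ_of_le (Nat.div_le_div_right hj.le)
    have near := mem_dynEntourage.1 (hcode _ _ (congrFun hxy ⟨j / n, hjn⟩)) (j % n)
      (Nat.mod_lt j hn)
    rw [mem_ofPred_eq, ← iterate_add_apply, ← iterate_add_apply, Nat.mod_add_div'] at near
    exact hfar.not_ge near
  simpa [Nat.card_fun] using Nat.card_le_card_of_injective itinerary itinerary_injective

theorem entScale_le_log_card_div (hK : MapsTo f K K) (hn : 0 < n)
    (hcode : ∀ x y, code x = code y → (x.1, y.1) ∈ dynEntourage f {q | dist q.1 q.2 ≤ ε} n) :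
    entScale f K ε ≤ (Real.log (Nat.card W) / n : ℝ) := by
  set L := Real.log (Nat.card W)
  have : 0 ≤ L := Real.log_natCast_nonneg _
  have log_sepNum_le (N : ℕ) : Real.log (sepNum f K N ε) ≤ (N / n + 1) * L := by
    rcases (sepNum f K N ε).eq_zero_or_pos with h0 | hpos
    · rw [h0, Nat.cast_zero, Real.log_zero]
      positivity
    calc Real.log (sepNum f K N ε) ≤ Real.log (Nat.card W ^ (N / n + 1) : ℕ) :=
          Real.log_le_log (Nat.cast_pos.2 hpos)
            (Nat.cast_le.2 (sepNum_le_card_pow hK hn hcode N))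
      _ = ((N / n : ℕ) + 1) * L := by rw [Nat.cast_pow, Real.log_pow, Nat.cast_succ]
      _ ≤ (N / n + 1) * L := by gcongr; exact Nat.cast_div_le
  have log_sepNum_div_le : ∀ᶠ N : ℕ in atTop,
      ((Real.log (sepNum f K N ε) / N : ℝ) : EReal) ≤ (L / n + L / N : ℝ) := by
    filter_upwards [eventually_gt_atTop 0] with N hN
    have hN' : (0 : ℝ) < N := Nat.cast_pos.2 hN
    rw [EReal.coe_le_coe_iff, div_le_iff₀ hN']
    exact (log_sepNum_le N).trans_eq (by field_simp)
  have tendsto_bound : Tendsto (fun N : ℕ ↦ ((L / n + L / N : ℝ) : EReal)) atTop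
      (𝓝 (L / n : ℝ)) := by
    refine (continuous_coe_real_ereal.tendsto _).comp ?_
    simpa using (tendsto_const_div_atTop_nhds_zero_nat L).const_add (L / n)
  exact (limsup_le_limsup log_sepNum_div_le).trans_eq tendsto_bound.limsup_eq

end Entropy

theorem mapsTo_closure_range_iterate {α : Type*} [TopologicalSpace α] {f : α → α}
    (hf : Continuous f) (z : α) :
    MapsTo f (closure (range fun k ↦ f^[k] z)) (closure (range fun k ↦ f^[k] z)) := by
  refine MapsTo.closure ?_ hf
  rintro _ ⟨k, rfl⟩
  exact ⟨k + 1, iterate_succ_apply' f k z⟩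

section Shadowing

variable {f : X → X}

theorem Traced.entScale_closure_range_le {C : ℕ → X} {t : ℕ → ℕ} {n p r : ℕ} {δ ε ε' b : ℝ} {z : X}
    (hz : Traced f C (fun _ ↦ n) t δ ε' z) (hs : IsBlockSequence (segStart (fun _ ↦ n) t) n δ)
    (hf : Continuous f) (hδ : δ ≤ 1) (hn : 0 < n) (hp : 0 < p) (hC : Periodic C p)
    (hε : 2 * ε' ≤ ε) {color : X → Fin r} (hcolor : ∀ x y, color x = color y → dist x y ≤ ε)
    (hb : p * (2 * n + 1) ^ 2 * Nat.card (SparseWord n (Fin r) (4 * (δ * n))) ≤ Real.exp (b * n)) :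
    entScale f (closure (range fun k ↦ f^[k] z)) ε ≤ (b : EReal) := by
  obtain ⟨label, hlabel⟩ := exists_label_concatOrbit hs hδ hn hp hC f
  obtain ⟨code, hcode⟩ := exists_code_of_card_filter_le hε hlabel hcolor
    (hz.card_filter_window_le hs hn)
  have code_mem (S S' : ℕ) (h : code S = code S') :
      (f^[S] z, f^[S'] z) ∈ dynEntourage f {q | dist q.1 q.2 ≤ ε} n := by
    refine mem_dynEntourage.2 fun j hj ↦ ?_
    simpa only [mem_ofPred_eq, ← iterate_add_apply, add_comm j] using hcode S S' h j hj
  obtain ⟨code', hcode'⟩ := exists_code_closure_range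
    (isClosed_dynEntourage hf (isClosed_le continuous_dist continuous_const) n) code_mem
  refine (entScale_le_log_card_div (mapsTo_closure_range_iterate hf z) hn hcode').trans ?_
  have card_pos := Nat.card_pos_iff.2 ⟨⟨code 0⟩, inferInstance⟩
  rw [EReal.coe_le_coe_iff, div_le_iff₀ (Nat.cast_pos.2 hn),
    Real.log_le_iff_le_exp (Nat.cast_pos.2 card_pos)]
  simpa [sq, mul_assoc] using hb

theorem exists_forall_traced_entScale_lt [CompactSpace X] (hf : Continuous f) {ε β : ℝ}
    (hε : 0 < ε) (hβ : 0 < β) {p : ℕ} (hp : 0 < p) :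
    ∃ δ₀ > 0, ∀ δ ≤ δ₀, ∀ᶠ n in atTop, ∀ C t z, ∀ ε' ≤ ε / 2, Periodic C p →
      IsBlockSequence (segStart (fun _ ↦ n) t) n δ → Traced f C (fun _ ↦ n) t δ ε' z →
      entScale f (closure (range fun k ↦ f^[k] z)) ε < (β : EReal) := by
  obtain ⟨r, color, hcolor⟩ := exists_coloring_dist_le X hε
  obtain ⟨κ, hκ, card_le⟩ := exists_card_sparseWord_le_exp (Fin r) (b := β / 4) (by positivity)
  refine ⟨min 1 (κ / 4), by positivity, fun δ hδ ↦ ?_⟩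
  filter_upwards [eventually_gt_atTop 0,
    eventually_mul_two_mul_add_one_sq_le_exp p (b := β / 4) (by positivity)]
    with n hn label_card_le C t z ε' hε' hC hs hz
  have word_card_le := card_le n (4 * (δ * n)) <| by
    have := mul_le_mul_of_nonneg_right (hδ.trans (min_le_right _ _)) n.cast_nonneg
    linarith
  refine (hz.entScale_closure_range_le hs hf (hδ.trans (min_le_left _ _)) hn hp hC (by linarith)
    hcolor (b := β / 2) ?_).trans_lt (EReal.coe_lt_coe_iff.2 (half_lt_self hβ))
  calc _ ≤ Real.exp (β / 4 * n) * Real.exp (β / 4 * n) := by gcongr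
    _ = Real.exp (β / 2 * n) := by rw [← Real.exp_add]; ring_nf

-- The four error terms: tracing error, badly traced times and gaps, the two ends of the window,
-- and the sampling error. Each is at most a quarter of `p * n * η`.
theorem exists_forall_traced_norm_birkhoffSum_le [CompactSpace X] [MeasurableSpace X]
    [BorelSpace X] {E : Type*} [NormedAddCommGroup E] [InnerProductSpace ℝ E] [CompleteSpace E]
    {μ : Measure X} [IsProbabilityMeasure μ] (hf : MeasurePreserving f μ μ) {g : X →ᵇ E}
    (h0 : ∫ x, g x ∂μ = 0) {η : ℝ} (hη : 0 < η) :
    ∃ p > 0, ∃ ε₀ > 0, ∃ δ₀ > 0, ∀ δ ≤ δ₀, ∀ ε ≤ ε₀, ∀ n > 0, ∃ C : ℕ → X, Periodic C p ∧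
      ∀ t z, IsBlockSequence (segStart (fun _ ↦ n) t) n δ → Traced f C (fun _ ↦ n) t δ ε z →
      ∀ S, ‖birkhoffSum f g (p * n) (f^[S] z)‖ ≤ (p * n : ℕ) * η := by
  set B := ‖g‖
  have hgB : ∀ x, ‖g x‖ ≤ B := g.norm_coe_le_norm
  have hg : Integrable g μ := g.continuous.integrable_of_hasCompactSupport
    (HasCompactSupport.of_compactSpace g)
  obtain ⟨ε₀, hε₀, dist_lt⟩ := Metric.uniformContinuous_iff.1
    (CompactSpace.uniformContinuous_of_continuous g.continuous) (η / 4) (by positivity)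
  obtain ⟨p, hp⟩ := exists_nat_gt (max (16 * B / η) (16 * B ^ 2 / η ^ 2))
  have hp_pos : 0 < p := Nat.cast_pos.1 ((by positivity : (0 : ℝ) ≤ _).trans_lt hp)
  obtain ⟨ends_le, sampling_le⟩ := max_lt_iff.1 hp
  rw [div_lt_iff₀ (by positivity)] at ends_le sampling_le
  obtain ⟨δ₀, hδ₀, gaps_le⟩ := exists_pos_mul_lt hη (16 * B)
  refine ⟨p, hp_pos, ε₀ / 2, half_pos hε₀, min 1 δ₀, by positivity,
    fun δ hδ ε hε n hn ↦ ?_⟩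
  obtain ⟨C, hC, hsum⟩ := exists_periodic_norm_sum_birkhoffSum_sq_le hf hg hgB h0 n p
  refine ⟨C, hC, fun t z hs hz S ↦ ?_⟩
  have dist_le (x y : X) (h : dist x y ≤ ε) : ‖g x - g y‖ ≤ η / 4 := by
    rw [← dist_eq_norm]
    exact (dist_lt (by linarith)).le
  have gaps_le : 16 * (δ * B) ≤ η := by
    have := mul_le_mul_of_nonneg_right (hδ.trans (min_le_right _ _)) (norm_nonneg g)
    linarith
  have sum_le : ‖∑ k ∈ Finset.range p, birkhoffSum f g n (C k)‖ ≤ p * n * (η / 4) := by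
    refine le_of_sq_le_sq (hsum.trans ?_) (by positivity)
    calc p * (n * B) ^ 2 = p * n ^ 2 * (16 * B ^ 2) / 16 := by ring
      _ ≤ p * n ^ 2 * (p * η ^ 2) / 16 := by gcongr
      _ = (p * n * (η / 4)) ^ 2 := by ring
  refine (hz.norm_birkhoffSum_window_le hs (hδ.trans (min_le_left _ _)) hn hgB (by positivity)
    dist_le hC S).trans ?_
  calc _ ≤ p * n * (η / 4) + p * n * (16 * (δ * B)) / 4 + n * (16 * B) / 4 + p * n * (η / 4) := by
        linarith
    _ ≤ p * n * (η / 4) + p * n * η / 4 + n * (p * η) / 4 + p * n * (η / 4) := by gcongr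
    _ = (p * n : ℕ) * η := by push_cast; ring

theorem ApproxProduct.eventually_exists_traced (hf : ApproxProduct f) {δ ε : ℝ} (hδ : 0 < δ)
    (hε : 0 < ε) : ∀ᶠ n in atTop, ∀ C, ∃ t z, IsBlockSequence (segStart (fun _ ↦ n) t) n δ ∧
      Traced f C (fun _ ↦ n) t δ ε z := by
  obtain ⟨M, hM⟩ := hf δ δ ε hδ hδ hε
  filter_upwards [eventually_gt_atTop M] with n hn C
  obtain ⟨t, ht, htδ, z, hz⟩ := hM n hn C
  exact ⟨t, z, isBlockSequence_segStart ht htδ, hz⟩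

end Shadowing

/-- **Proposition 2.4 (entropy denseness).** For a compact system with the approximate
product property: given an invariant probability measure `μ`, a weak-* open
neighborhood `U` of `μ`, and `ε, β > 0`, there is a nonempty compact invariant set
`Λ ⊆ X` such that every invariant probability measure giving full mass to `Λ` lies
in `U`, and `h(Λ, f, ε) < β`. -/
theorem app_entropy_denseness
    {X : Type*} [MetricSpace X] [CompactSpace X] [MeasurableSpace X] [BorelSpace X]
    (f : X → X) (hf : Continuous f) (happ : ApproxProduct f)
    (μ : ProbabilityMeasure X) (hμ : Measure.map f (μ : Measure X) = μ)
    (U : Set (ProbabilityMeasure X)) (hU : IsOpen U) (hμU : μ ∈ U)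
    (ε β : ℝ) (hε : 0 < ε) (hβ : 0 < β) :
    ∃ Λ : Set X, Λ.Nonempty ∧ IsCompact Λ ∧ f '' Λ ⊆ Λ ∧
      (∀ ν : ProbabilityMeasure X, Measure.map f (ν : Measure X) = ν →
        (ν : Measure X) Λ = 1 → ν ∈ U) ∧
      entScale f Λ ε < (β : EReal) := by
  obtain ⟨I, Ψ, integral_zero, η, hη, mem_U⟩ :=
    exists_integral_eq_zero_forall_mem_of_norm_integral_le μ (hU.mem_nhds hμU)
  obtain ⟨p, hp, ε₁, hε₁, δ₁, hδ₁, exists_points⟩ := exists_forall_traced_norm_birkhoffSum_le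
    (⟨hf.measurable, hμ⟩ : MeasurePreserving f (μ : Measure X) μ) integral_zero hη
  obtain ⟨δ₂, hδ₂, entScale_lt⟩ := exists_forall_traced_entScale_lt hf hε hβ hp
  obtain ⟨n, hn, exists_traced, entScale_lt⟩ := ((eventually_gt_atTop 0).and
    ((happ.eventually_exists_traced (lt_min hδ₁ hδ₂) (lt_min hε₁ (half_pos hε))).and
      (entScale_lt _ (min_le_right δ₁ δ₂)))).exists
  obtain ⟨C, hC, norm_le⟩ :=
    exists_points _ (min_le_left δ₁ δ₂) _ (min_le_left ε₁ (ε / 2)) n hn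
  obtain ⟨t, z, hs, hz⟩ := exists_traced C
  refine ⟨closure (range fun k ↦ f^[k] z), ⟨z, subset_closure ⟨0, rfl⟩⟩,
    isClosed_closure.isCompact, (mapsTo_closure_range_iterate hf z).image_subset,
    fun ν hν hνΛ ↦ mem_U ν ?_, entScale_lt C t z _ (min_le_right _ _) hC hs hz⟩
  exact norm_integral_le_of_measure_closure_eq_one ⟨hf.measurable, hν⟩ hf Ψ.continuous
    (Ψ.integrable _) hνΛ (Nat.mul_pos hp hn) (forall_mem_range.2 (norm_le t z hs hz))

end Defs
end

section
/- Let (X,d) be a compact metric space and f : X → X a continuous map such that (X,f) has the strict approximate product property. If (X,f) is uniquely ergodic, then (X,f) is minimal. -/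
open MeasureTheory Filter Set

section Defs

variable {X : Type*} [MetricSpace X]

/-!
Let `μ` be the invariant probability measure. Limit points of the empirical measures of an orbit are
invariant, so by compactness the empirical measures of every point converge to `μ`. The
strict approximate product property, applied to the constant sequence `y, y, …`, yields an orbit
which visits a given ball around `y` with bounded gaps, hence with positive lower density.
Therefore `μ` charges that ball, and `μ` has full support. An orbit whose empirical measures
converge to a measure of full support is dense.
-/

open scoped Topology ENNReal

section Count

variable {p : ℕ → Prop} [DecidablePred p] {s : ℕ → ℕ}

theorem lt_count_succ_of_strictMono (hs : StrictMono s) (hp : ∀ k, p (s k)) (k : ℕ) :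
    k < Nat.count p (s k + 1) := by
  induction k with
  | zero => exact (Nat.zero_le _).trans_lt (Nat.count_lt_count_succ_iff.mpr (hp 0))
  | succ k ih =>
    calc k + 1 ≤ Nat.count p (s k + 1) := ih
      _ ≤ Nat.count p (s (k + 1)) := Nat.count_monotone p (hs k.lt_succ_self)
      _ < Nat.count p (s (k + 1) + 1) := Nat.count_lt_count_succ_iff.mpr (hp (k + 1))

theorem le_mul_count_of_strictMono {L : ℕ} (hs : StrictMono s) (hsL : ∀ k, s k ≤ L * k)
    (hp : ∀ k, p (s k)) (n : ℕ) : n ≤ L * Nat.count p n := by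
  have hL : 0 < L := by
    have h01 : s 0 < s 1 := hs one_pos
    have h1 := hsL 1
    omega
  cases n with
  | zero => exact Nat.zero_le _
  | succ n =>
    have hcount : n / L < Nat.count p (n + 1) :=
      calc n / L < Nat.count p (s (n / L) + 1) := lt_count_succ_of_strictMono hs hp _
        _ ≤ Nat.count p (n + 1) :=
          Nat.count_monotone p (Nat.succ_le_succ ((hsL _).trans (Nat.mul_div_le n L)))
    rw [mul_comm]
    exact (Nat.div_lt_iff_lt_mul hL).mp hcount

end Count

section EmpiricalMeasure

variable {α : Type*} [MeasurableSpace α]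

/-- The empirical measure of the first `n + 1` points `x, f x, …, f^[n] x` of the orbit of `x`,
each point having mass `1 / (n + 1)`. The shift of the index makes it a probability measure for
every `n`. -/
noncomputable def empiricalMeasure (f : α → α) (n : ℕ) (x : α) : ProbabilityMeasure α :=
  ⟨((n + 1 : ℕ) : ℝ≥0∞)⁻¹ • ∑ i ∈ Finset.range (n + 1), Measure.dirac (f^[i] x), ⟨by
    simpa using ENNReal.inv_mul_cancel (by positivity) (by finiteness)⟩⟩

theorem toMeasure_empiricalMeasure (f : α → α) (n : ℕ) (x : α) :
    (empiricalMeasure f n x : Measure α) =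
      ((n + 1 : ℕ) : ℝ≥0∞)⁻¹ • ∑ i ∈ Finset.range (n + 1), Measure.dirac (f^[i] x) :=
  rfl

open scoped Classical in
theorem empiricalMeasure_apply (f : α → α) (n : ℕ) (x : α) {F : Set α} (hF : MeasurableSet F) :
    (empiricalMeasure f n x : Measure α) F =
      ((n + 1 : ℕ) : ℝ≥0∞)⁻¹ * Nat.count (fun i ↦ f^[i] x ∈ F) (n + 1) := by
  rw [toMeasure_empiricalMeasure, Measure.smul_apply, Measure.finsetSum_apply, smul_eq_mul,
    Nat.count_eq_card_filter_range, Finset.natCast_card_filter]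
  simp only [Measure.dirac_apply' _ hF, indicator_apply, Pi.one_apply]

theorem integral_empiricalMeasure {E : Type*} [NormedAddCommGroup E] [NormedSpace ℝ E]
    [CompleteSpace E] (f : α → α) (n : ℕ) (x : α) {g : α → E} (hg : StronglyMeasurable g) :
    ∫ y, g y ∂(empiricalMeasure f n x : Measure α) = birkhoffAverage ℝ f g (n + 1) x := by
  rw [toMeasure_empiricalMeasure, integral_smul_measure,
    integral_finsetSum_measure fun i _ ↦ integrable_dirac' hg (by simp)]
  simp only [integral_dirac' _ _ hg, ENNReal.toReal_inv, ENNReal.toReal_natCast, birkhoffAverage,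
    birkhoffSum]

theorem map_empiricalMeasure {f : α → α} (hf : Measurable f) (n : ℕ) (x : α) :
    (empiricalMeasure f n x).map hf.aemeasurable = empiricalMeasure f n (f x) := by
  apply ProbabilityMeasure.toMeasure_injective
  simp only [ProbabilityMeasure.toMeasure_map, toMeasure_empiricalMeasure, Measure.map_smul,
    Measure.map_finset_sum hf.aemeasurable, Measure.map_dirac' hf,
    ← Function.iterate_succ_apply, ← Function.iterate_succ_apply']

open scoped Classical in
theorem inv_le_empiricalMeasure_of_le_mul_count {f : α → α} {x : α} {F : Set α}
    (hF : MeasurableSet F) {L n : ℕ}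
    (hcount : n + 1 ≤ L * Nat.count (fun i ↦ f^[i] x ∈ F) (n + 1)) :
    (L : ℝ≥0∞)⁻¹ ≤ (empiricalMeasure f n x : Measure α) F := by
  rw [empiricalMeasure_apply f n x hF, mul_comm, ← div_eq_mul_inv,
    ENNReal.le_div_iff_mul_le (.inl (by positivity)) (.inl (by finiteness)), mul_comm,
    ← div_eq_mul_inv]
  exact ENNReal.div_le_of_le_mul' (mod_cast hcount)

theorem empiricalMeasure_eq_one_of_forall_mem {f : α → α} {x : α} {F : Set α}
    (hF : MeasurableSet F) (hmem : ∀ i, f^[i] x ∈ F) (n : ℕ) :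
    (empiricalMeasure f n x : Measure α) F = 1 := by
  classical
  rw [empiricalMeasure_apply f n x hF, Nat.count_of_forall fun i _ ↦ hmem i]
  exact ENNReal.inv_mul_cancel (by positivity) (by finiteness)

end EmpiricalMeasure

section Limits

variable {α : Type*} [TopologicalSpace α] [MeasurableSpace α]

theorem tendsto_empiricalMeasure_apply [OpensMeasurableSpace α] {f : α → α} {x : α} {l : Filter ℕ}
    (hl : l ≤ atTop) {μ : ProbabilityMeasure α} (hμ : Tendsto (empiricalMeasure f · x) l (𝓝 μ)) :
    Tendsto (empiricalMeasure f · (f x)) l (𝓝 μ) := by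
  rw [ProbabilityMeasure.tendsto_iff_forall_integral_tendsto] at hμ ⊢
  intro g
  have hg : StronglyMeasurable g := g.continuous.stronglyMeasurable
  have hdiff : Tendsto (fun n ↦ birkhoffAverage ℝ f g (n + 1) (f x) -
      birkhoffAverage ℝ f g (n + 1) x) l (𝓝 0) :=
    ((tendsto_birkhoffAverage_apply_sub_birkhoffAverage' ℝ g.isBounded_range f x).comp
      (tendsto_add_atTop_nat 1)).mono_left hl
  simpa only [integral_empiricalMeasure _ _ _ hg, sub_add_cancel, zero_add] using hdiff.add (hμ g)

theorem map_eq_of_tendsto_empiricalMeasure [BorelSpace α] [HasOuterApproxClosed α] {f : α → α}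
    (hf : Continuous f) {x : α} {l : Filter ℕ} [l.NeBot] (hl : l ≤ atTop) {μ : ProbabilityMeasure α}
    (hμ : Tendsto (empiricalMeasure f · x) l (𝓝 μ)) : μ.map hf.aemeasurable = μ := by
  have hmap := ProbabilityMeasure.tendsto_map_of_tendsto_of_continuous _ μ hμ hf
  simp only [map_empiricalMeasure hf.measurable] at hmap
  exact tendsto_nhds_unique hmap (tendsto_empiricalMeasure_apply hl hμ)

variable [OpensMeasurableSpace α] [HasOuterApproxClosed α]

theorem le_measure_of_frequently_le_of_tendsto {ι : Type*} {l : Filter ι}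
    {ν : ι → ProbabilityMeasure α} {μ : ProbabilityMeasure α} (hν : Tendsto ν l (𝓝 μ)) {F : Set α}
    (hF : IsClosed F) {c : ℝ≥0∞} (hc : ∃ᶠ i in l, c ≤ (ν i : Measure α) F) :
    c ≤ (μ : Measure α) F :=
  (le_limsup_of_frequently_le' hc).trans
    (ProbabilityMeasure.limsup_measure_closed_le_of_tendsto hν hF)

theorem dense_orbit_of_tendsto_empiricalMeasure {f : α → α} {x : α} {μ : ProbabilityMeasure α}
    [(μ : Measure α).IsOpenPosMeasure] (hμ : Tendsto (empiricalMeasure f · x) atTop (𝓝 μ)) :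
    Dense (range fun n ↦ f^[n] x) := by
  set K : Set α := closure (range fun n ↦ f^[n] x)
  have hK : IsClosed K := isClosed_closure
  have hemp (n : ℕ) : (empiricalMeasure f n x : Measure α) K = 1 :=
    empiricalMeasure_eq_one_of_forall_mem hK.measurableSet
      (fun i ↦ subset_closure (mem_range_self i)) n
  have hμK : (μ : Measure α) K = 1 :=
    prob_le_one.antisymm
      (le_measure_of_frequently_le_of_tendsto hμ hK (.of_forall fun n ↦ (hemp n).ge))
  exact dense_closure.mp (Measure.dense_of_ae ((mem_ae_iff_prob_eq_one hK.measurableSet).mpr hμK))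

end Limits

section UniqueErgodicity

variable [CompactSpace X] [MeasurableSpace X] [BorelSpace X] {f : X → X}

theorem UniquelyErgodic.exists_tendsto_empiricalMeasure (hf : Continuous f)
    (huniq : UniquelyErgodic f) :
    ∃ μ : ProbabilityMeasure X, ∀ x, Tendsto (empiricalMeasure f · x) atTop (𝓝 μ) := by
  obtain ⟨μ, ⟨hμprob, -⟩, hμuniq⟩ := huniq
  refine ⟨⟨μ, hμprob⟩, fun x ↦ tendsto_nhds_of_unique_mapClusterPt fun ν hν ↦ ?_⟩
  obtain ⟨U, hU, hνU⟩ := mapClusterPt_iff_ultrafilter.mp hν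
  have hνinv : ν.map hf.aemeasurable = ν := map_eq_of_tendsto_empiricalMeasure hf hU hνU
  exact Subtype.ext (hμuniq ν ⟨inferInstance, congrArg Subtype.val hνinv⟩)

end UniqueErgodicity

section Tracing

theorem segStart_succ (m t : ℕ → ℕ) (k : ℕ) :
    segStart m t (k + 1) = segStart m t k + (m k + t k - 1) :=
  Finset.sum_range_succ _ k

theorem strictMono_segStart {m t : ℕ → ℕ} (h : ∀ k, 1 < m k + t k) : StrictMono (segStart m t) :=
  strictMono_nat_of_lt_succ fun k ↦ by
    rw [segStart_succ]
    exact Nat.lt_add_of_pos_right (Nat.sub_pos_of_lt (h k))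

theorem segStart_le_mul {m t : ℕ → ℕ} {L : ℕ} (h : ∀ k, m k + t k - 1 ≤ L) (k : ℕ) :
    segStart m t k ≤ L * k :=
  calc segStart m t k ≤ (Finset.range k).card • L := Finset.sum_le_card_nsmul _ _ L fun i _ ↦ h i
    _ = L * k := by rw [Finset.card_range, smul_eq_mul, mul_comm]

variable {f : X → X}

theorem Traced.dist_le {C : ℕ → X} {m t : ℕ → ℕ} {ε : ℝ} {z : X} (hz : Traced f C m t 0 ε z)
    {k j : ℕ} (hj : j < m k) : dist (f^[segStart m t k + j] z) (f^[j] (C k)) ≤ ε := by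
  have hcard := hz k
  rw [zero_mul, ← Nat.cast_zero, Nat.cast_le, Nat.le_zero, Finset.card_eq_zero,
    Finset.filter_eq_empty_iff] at hcard
  exact not_lt.mp (hcard (Finset.mem_range.mpr hj))

open scoped Classical in
theorem StrictApproxProduct.exists_forall_le_mul_count (hf : StrictApproxProduct f) (y : X) {ε : ℝ}
    (hε : 0 < ε) :
    ∃ (z : X) (L : ℕ), ∀ n, n ≤ L * Nat.count (fun i ↦ f^[i] z ∈ Metric.closedBall y ε) n := by
  obtain ⟨M, hM⟩ := hf 1 ε one_pos hε
  obtain ⟨t, ht_pos, ht_le, z, hz⟩ := hM (M + 1) M.lt_succ_self fun _ ↦ y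
  have ht_le' (k : ℕ) : t k ≤ 1 + (M + 1) := by
    have h := ht_le k
    rw [one_mul] at h
    exact_mod_cast h
  have hmono : StrictMono (segStart (fun _ ↦ M + 1) t) :=
    strictMono_segStart fun k ↦ by have := ht_pos k; omega
  have hle : ∀ k, segStart (fun _ ↦ M + 1) t k ≤ 2 * (M + 1) * k :=
    segStart_le_mul fun k ↦ by have := ht_le' k; omega
  exact ⟨z, 2 * (M + 1), le_mul_count_of_strictMono hmono hle fun k ↦ hz.dist_le M.succ_pos⟩

theorem StrictApproxProduct.isOpenPosMeasure [MeasurableSpace X] [OpensMeasurableSpace X]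
    (hf : StrictApproxProduct f) {μ : ProbabilityMeasure X}
    (hμ : ∀ x, Tendsto (empiricalMeasure f · x) atTop (𝓝 μ)) :
    (μ : Measure X).IsOpenPosMeasure := by
  classical
  refine ⟨fun U hU ⟨y, hy⟩ ↦ ?_⟩
  obtain ⟨ε, hε, hεU⟩ := Metric.nhds_basis_closedBall.mem_iff.mp (hU.mem_nhds hy)
  obtain ⟨z, L, hzL⟩ := hf.exists_forall_le_mul_count y hε
  have hemp (n : ℕ) :
      (L : ℝ≥0∞)⁻¹ ≤ (empiricalMeasure f n z : Measure X) (Metric.closedBall y ε) :=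
    inv_le_empiricalMeasure_of_le_mul_count Metric.isClosed_closedBall.measurableSet (hzL (n + 1))
  have hμU : (L : ℝ≥0∞)⁻¹ ≤ (μ : Measure X) U :=
    (le_measure_of_frequently_le_of_tendsto (hμ z) Metric.isClosed_closedBall
      (.of_forall hemp)).trans (measure_mono hεU)
  exact ((ENNReal.inv_pos.mpr (ENNReal.natCast_ne_top L)).trans_le hμU).ne'

end Tracing

/-- **Proposition 2.7 (Sun).** A uniquely ergodic compact system with the strict
approximate product property is minimal. -/
theorem sapp_uniquelyErgodic_minimal
    {X : Type*} [MetricSpace X] [CompactSpace X] [MeasurableSpace X] [BorelSpace X]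
    (f : X → X) (hf : Continuous f) (hsapp : StrictApproxProduct f)
    (huniq : UniquelyErgodic f) :
    MinimalSystem f := by
  obtain ⟨μ, hμ⟩ := huniq.exists_tendsto_empiricalMeasure hf
  have : (μ : Measure X).IsOpenPosMeasure := hsapp.isOpenPosMeasure hμ
  exact fun x ↦ dense_orbit_of_tendsto_empiricalMeasure (hμ x)

end Defs
end
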